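/- arXiv:0812.2111 — 2 statements merged into one kernel-verified Lean document; each statement's English description precedes it below -/
import Mathlib

section
/- The set of closed subgroups of ℝⁿ of type (p,q) is contained in the closure (in the Chabauty topology) of the set of closed subgroups of type (r,s) if and only if r ≤ p and r + s ≥ p + q. -/
/-!
Two integers are attached to a closed subgroup `Γ` of `ℝⁿ`: the dimension of the largest linear
subspace contained in `Γ`, which is upper semicontinuous for the Chabauty topology, and the
dimension of the linear span of `Γ`, which is lower semicontinuous. They equal `p` and `p + q` in
type `(p, q)`, so a limit of type `(p, q)` of groups of type `(r, s)` has `r ≤ p` and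
`p + q ≤ r + s`. Conversely, the lattices `δ • ℤ` converge to `ℝ` as `δ → 0⁺` and to `0` as `δ → ∞`,
so a group of type `(p, q)` is a limit of groups in which some real generators have been replaced by
short integral ones and long integral ones have been adjoined in new directions.
-/

noncomputable section

abbrev Euc (n : ℕ) := EuclideanSpace ℝ (Fin n)

/-- A point of the Chabauty space of ℝⁿ: a closed additive subgroup. -/
def ChabautyPoint (n : ℕ) : Type := {Γ : AddSubgroup (Euc n) // IsClosed (Γ : Set (Euc n))}

/-- The Chabauty (Fell) topology on the space of closed subgroups of ℝⁿ. -/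
instance chabautyTopology (n : ℕ) : TopologicalSpace (ChabautyPoint n) :=
  TopologicalSpace.generateFrom
    ({S | ∃ K : Set (Euc n), IsCompact K ∧
        S = {Γ : ChabautyPoint n | ((Γ.1 : Set (Euc n)) ∩ K) = ∅}} ∪
     {S | ∃ U : Set (Euc n), IsOpen U ∧
        S = {Γ : ChabautyPoint n | ((Γ.1 : Set (Euc n)) ∩ U).Nonempty}})

/-- The stratum of type (p,q) closed subgroups of ℝⁿ. -/
def stratum (n p q : ℕ) : Set (ChabautyPoint n) :=
  {Γ : ChabautyPoint n |
    ∃ e : Γ.1 ≃+ ((Fin p → ℝ) × (Fin q → ℤ)), Continuous e ∧ Continuous e.symm}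

open Filter Module Set Topology

section Lineality

variable {E : Type*} [AddCommGroup E] [Module ℝ E]

/-- The lineality space of a subgroup of a real vector space: the largest linear subspace
contained in it. -/
def lineality (Γ : AddSubgroup E) : Submodule ℝ E where
  carrier := {x | ∀ a : ℝ, a • x ∈ Γ}
  zero_mem' a := by simp
  add_mem' hx hy a := by simpa using add_mem (hx a) (hy a)
  smul_mem' b x hx a := by simpa [smul_smul] using hx (a * b)

theorem mem_lineality {Γ : AddSubgroup E} {x : E} : x ∈ lineality Γ ↔ ∀ a : ℝ, a • x ∈ Γ :=
  Iff.rfl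

end Lineality

theorem tendsto_floor_div_mul_nhdsGT_zero (a : ℝ) :
    Tendsto (fun δ : ℝ => (⌊a / δ⌋ : ℝ) * δ) (𝓝[>] 0) (𝓝 a) := by
  have hlower : Tendsto (fun δ : ℝ => a - δ) (𝓝[>] 0) (𝓝 a) := by
    simpa using ((continuous_sub_left a).tendsto 0).mono_left nhdsWithin_le_nhds
  refine tendsto_of_tendsto_of_tendsto_of_le_of_le' hlower tendsto_const_nhds ?_ ?_ <;>
    filter_upwards [self_mem_nhdsWithin] with δ hδ
  · linarith [Int.sub_floor_div_mul_lt a hδ]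
  · linarith [Int.sub_floor_div_mul_nonneg a hδ]

section Isolation

variable {E : Type*} [NormedAddCommGroup E] [NormedSpace ℝ E] {Γ : AddSubgroup E}

-- The multiples `⌊a / ‖x t‖⌋ • x t` lie in `Γ` and converge to `a • u`.
theorem mem_lineality_of_tendsto_normalize (hΓ : IsClosed (Γ : Set E)) {α : Type*} {l : Filter α}
    [l.NeBot] {x : α → E} {u : E} (hxΓ : ∀ᶠ t in l, x t ∈ Γ) (hx : Tendsto x l (𝓝[≠] 0))
    (hu : Tendsto (fun t => ‖x t‖⁻¹ • x t) l (𝓝 u)) : u ∈ lineality Γ := by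
  intro a
  have hlim : Tendsto (fun t => ((⌊a / ‖x t‖⌋ : ℝ) * ‖x t‖) • ‖x t‖⁻¹ • x t) l (𝓝 (a • u)) :=
    ((tendsto_floor_div_mul_nhdsGT_zero a).comp (tendsto_norm_nhdsNE_zero.comp hx)).smul hu
  refine hΓ.mem_of_tendsto hlim ?_
  filter_upwards [hxΓ, hx.eventually self_mem_nhdsWithin] with t htΓ ht
  rw [mul_smul, smul_inv_smul₀ (norm_ne_zero_iff.2 ht), Int.cast_smul_eq_zsmul]
  exact zsmul_mem htΓ _

theorem eventually_nhdsNE_zero_notMem_of_disjoint_lineality [FiniteDimensional ℝ E]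
    (hΓ : IsClosed (Γ : Set E)) {W : Submodule ℝ E} (hW : Disjoint (lineality Γ) W) :
    ∀ᶠ x in 𝓝[≠] 0, x ∈ Γ → x ∉ W := by
  by_contra hfreq
  simp only [not_eventually, Classical.not_imp, not_not] at hfreq
  obtain ⟨x, hx, hxΓW⟩ := exists_seq_forall_of_frequently (hfreq.and_eventually self_mem_nhdsWithin)
  have hsphere (t : ℕ) : ‖x t‖⁻¹ • x t ∈ Metric.sphere (0 : E) 1 := by
    simp [norm_smul, show x t ≠ 0 from (hxΓW t).2]
  obtain ⟨u, hu, ν, hν, hlim⟩ := (isCompact_sphere (0 : E) 1).tendsto_subseq hsphere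
  have huΓ : u ∈ lineality Γ := mem_lineality_of_tendsto_normalize hΓ
    (.of_forall fun t => (hxΓW (ν t)).1.1) (hx.comp hν.tendsto_atTop) hlim
  have huW : u ∈ W := W.closed_of_finiteDimensional.mem_of_tendsto hlim
    (.of_forall fun t => W.smul_mem _ (hxΓW (ν t)).1.2)
  exact Metric.ne_of_mem_sphere hu one_ne_zero (Submodule.disjoint_def.1 hW u huΓ huW)

theorem disjoint_lineality_of_inter_sphere_eq_empty {W : Submodule ℝ E} {ε : ℝ} (hε : 0 ≤ ε)
    (h : (Γ : Set E) ∩ (W ∩ Metric.sphere 0 ε) = ∅) : Disjoint (lineality Γ) W := by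
  refine Submodule.disjoint_def.2 fun x hxΓ hxW => by_contra fun hx => ?_
  refine eq_empty_iff_forall_notMem.1 h ((ε / ‖x‖) • x) ⟨hxΓ _, W.smul_mem _ hxW, ?_⟩
  simp [norm_smul, abs_of_nonneg hε, hx]

end Isolation

namespace ChabautyPoint

variable {n : ℕ}

theorem isOpen_setOf_inter_eq_empty {K : Set (Euc n)} (hK : IsCompact K) :
    IsOpen {Γ : ChabautyPoint n | (Γ.1 : Set (Euc n)) ∩ K = ∅} :=
  TopologicalSpace.isOpen_generateFrom_of_mem (.inl ⟨K, hK, rfl⟩)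

theorem isOpen_setOf_inter_nonempty {U : Set (Euc n)} (hU : IsOpen U) :
    IsOpen {Γ : ChabautyPoint n | ((Γ.1 : Set (Euc n)) ∩ U).Nonempty} :=
  TopologicalSpace.isOpen_generateFrom_of_mem (.inr ⟨U, hU, rfl⟩)

theorem tendsto_of_eventually_mem_of_exists_tendsto {α : Type*} {l : Filter α}
    {Δ : α → ChabautyPoint n} {Γ : ChabautyPoint n}
    (hupper : ∀ R : ℝ, ∀ᶠ t in l, ∀ x ∈ (Δ t).1, ‖x‖ ≤ R → x ∈ Γ.1)
    (hlower : ∀ x ∈ Γ.1, ∃ y : α → Euc n, (∀ᶠ t in l, y t ∈ (Δ t).1) ∧ Tendsto y l (𝓝 x)) :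
    Tendsto Δ l (𝓝 Γ) := by
  rw [TopologicalSpace.tendsto_nhds_generateFrom_iff]
  rintro _ (⟨K, hK, rfl⟩ | ⟨U, hU, rfl⟩) hΓ
  · obtain ⟨R, hR⟩ := hK.isBounded.exists_norm_le
    filter_upwards [hupper R] with t ht
    exact eq_empty_of_forall_notMem fun x ⟨hxΔ, hxK⟩ =>
      eq_empty_iff_forall_notMem.1 hΓ x ⟨ht x hxΔ (hR x hxK), hxK⟩
  · obtain ⟨x, hxΓ, hxU⟩ := hΓ
    obtain ⟨y, hyΔ, hy⟩ := hlower x hxΓ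
    filter_upwards [hyΔ, hy.eventually_mem (hU.mem_nhds hxU)] with t htΔ htU
    exact ⟨y t, htΔ, htU⟩

-- If `W` complements the lineality space of `Γ`, then `Γ` misses a small sphere of `W`; so do
-- nearby subgroups, whose lineality spaces therefore meet `W` trivially.
theorem upperSemicontinuous_finrank_lineality :
    UpperSemicontinuous fun Γ : ChabautyPoint n => finrank ℝ (lineality Γ.1) := by
  intro Γ k hk
  obtain ⟨W, hW⟩ := (lineality Γ.1).exists_isCompl
  have hisolated := eventually_nhdsNE_zero_notMem_of_disjoint_lineality Γ.2 hW.disjoint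
  obtain ⟨ε, hε, hball⟩ := Metric.eventually_nhds_iff_ball.1 (eventually_nhdsWithin_iff.1 hisolated)
  let K : Set (Euc n) := W ∩ Metric.sphere 0 (ε / 2)
  have hK : IsCompact K := (isCompact_sphere _ _).inter_left W.closed_of_finiteDimensional
  have hΓK : (Γ.1 : Set (Euc n)) ∩ K = ∅ := by
    refine eq_empty_of_forall_notMem fun x ⟨hxΓ, hxW, hx⟩ => hball x ?_ ?_ hxΓ hxW
    · exact Metric.sphere_subset_ball (half_lt_self hε) hx
    · exact Metric.ne_of_mem_sphere hx (half_pos hε).ne'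
  filter_upwards [(isOpen_setOf_inter_eq_empty hK).mem_nhds hΓK] with Δ hΔK
  have hdisjoint := disjoint_lineality_of_inter_sphere_eq_empty (half_pos hε).le hΔK
  have hle := Submodule.finrank_add_finrank_le_of_disjoint hdisjoint
  rw [← Submodule.finrank_add_eq_of_isCompl hW] at hle
  exact (le_of_add_le_add_right hle).trans_lt hk

theorem lowerSemicontinuous_finrank_span :
    LowerSemicontinuous fun Γ : ChabautyPoint n =>
      finrank ℝ (Submodule.span ℝ (Γ.1 : Set (Euc n))) := by
  intro Γ k hk
  obtain ⟨f, hfΓ, -, hf⟩ := Submodule.exists_fun_fin_finrank_span_eq ℝ (Γ.1 : Set (Euc n))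
  obtain ⟨U, hU, hUf⟩ := isOpen_pi_iff'.1 isOpen_setOfPred_linearIndependent f hf
  have hopen := isOpen_iInter_of_finite fun i => isOpen_setOf_inter_nonempty (hU i).1
  filter_upwards [hopen.mem_nhds (mem_iInter.2 fun i => ⟨f i, hfΓ i, (hU i).2⟩)] with Δ hΔ
  choose g hgΔ hgU using mem_iInter.1 hΔ
  have hg : LinearIndependent ℝ g := hUf fun i _ => hgU i
  calc k < _ := hk
    _ = finrank ℝ (Submodule.span ℝ (range g)) := by simp [finrank_span_eq_card hg]
    _ ≤ _ := Submodule.finrank_mono (Submodule.span_mono (range_subset_iff.2 hgΔ))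

end ChabautyPoint

theorem eq_zero_of_forall_mul_mem_range_intCast {x : ℝ}
    (hx : ∀ a : ℝ, a * x ∈ range ((↑) : ℤ → ℝ)) : x = 0 := by
  by_contra hne
  obtain ⟨m, hm⟩ := hx (2 * x)⁻¹
  have htwo : (2 * m : ℝ) = 1 := by rw [hm]; field_simp
  norm_cast at htwo
  lia


section MixedCombination

variable {ι κ E : Type*} [Fintype ι] [Fintype κ]

section Algebra

variable [AddCommGroup E] [Module ℝ E]

/-- The combinations of a family of vectors with real coefficients on `ι` and integer coefficients
on `κ`. Its range is the general form of a closed subgroup of type `(#ι, #κ)`. -/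
def mixedCombination (c : ι ⊕ κ → E) : (ι → ℝ) × (κ → ℤ) →+ E :=
  .mk' (fun z => Fintype.linearCombination ℝ c (Sum.elim z.1 fun k => z.2 k)) fun z z' => by
    rw [← map_add]
    congr 1
    ext (i | k) <;> simp

theorem mixedCombination_apply (c : ι ⊕ κ → E) (y : ι → ℝ) (m : κ → ℤ) :
    mixedCombination c (y, m) = Fintype.linearCombination ℝ c (Sum.elim y fun k => m k) :=
  rfl

theorem span_range_mixedCombination (c : ι ⊕ κ → E) :
    Submodule.span ℝ ((mixedCombination c).range : Set E) = Submodule.span ℝ (range c) := by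
  classical
  refine le_antisymm (Submodule.span_le.2 ?_) (Submodule.span_mono ?_)
  · rintro _ ⟨⟨y, m⟩, rfl⟩
    rw [mixedCombination_apply, ← Fintype.range_linearCombination]
    exact LinearMap.mem_range_self _ _
  · rintro _ ⟨i | k, rfl⟩
    · exact ⟨(Pi.single i 1, 0), by simp [mixedCombination_apply, Fintype.linearCombination_apply,
        Pi.single_apply]⟩
    · exact ⟨(0, Pi.single k 1), by simp [mixedCombination_apply, Fintype.linearCombination_apply,
        Pi.single_apply]⟩

theorem lineality_range_mixedCombination {c : ι ⊕ κ → E} (hc : LinearIndependent ℝ c) :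
    lineality (mixedCombination c).range = Submodule.span ℝ (range (c ∘ Sum.inl)) := by
  ext x
  rw [← Fintype.range_linearCombination, mem_lineality]
  constructor
  · intro hx
    obtain ⟨⟨y, m⟩, hym⟩ := one_smul ℝ x ▸ hx 1
    have hm (k : κ) : (m k : ℝ) = 0 := eq_zero_of_forall_mul_mem_range_intCast fun a => by
      obtain ⟨⟨y', m'⟩, hym'⟩ := hx a
      rw [← hym, mixedCombination_apply, mixedCombination_apply, ← map_smul] at hym'
      exact ⟨m' k, congrFun (hc.fintypeLinearCombination_injective hym') (.inr k)⟩
    exact ⟨y, by simp [← hym, mixedCombination_apply, Fintype.linearCombination_apply, hm]⟩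
  · rintro ⟨y, rfl⟩ a
    exact ⟨(a • y, 0), by
      simp [mixedCombination_apply, Fintype.linearCombination_apply, Finset.smul_sum, smul_smul]⟩

end Algebra

theorem exists_mixedCombination_eq [AddCommGroup E] [Module ℝ E] [TopologicalSpace E]
    [ContinuousSMul ℝ E] [T2Space E] (ψ : (ι → ℝ) × (κ → ℤ) →+ E) (hψ : Continuous ψ) :
    ∃ c : ι ⊕ κ → E, mixedCombination c = ψ := by
  classical
  let ψ₁ : (ι → ℝ) →L[ℝ] E :=
    (ψ.comp (AddMonoidHom.inl _ _)).toRealLinearMap (hψ.comp (.prodMk_left 0))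
  let ψ₂ : (κ → ℤ) →ₗ[ℤ] E := (ψ.comp (AddMonoidHom.inr _ _)).toIntLinearMap
  let c : ι ⊕ κ → E := Sum.elim (fun i => ψ₁ (Pi.single i 1)) fun k => ψ₂ (Pi.single k 1)
  refine ⟨c, AddMonoidHom.ext fun ⟨y, m⟩ => ?_⟩
  calc mixedCombination c (y, m)
      = ∑ i, y i • ψ₁ (Pi.single i 1) + ∑ k, m k • ψ₂ (Pi.single k 1) := by
        simp [mixedCombination_apply, Fintype.linearCombination_apply, c, Int.cast_smul_eq_zsmul]
    _ = ψ₁ y + ψ₂ m := by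
        conv_rhs => rw [pi_eq_sum_univ' y, pi_eq_sum_univ' m]
        simp only [map_sum, map_smul]
    _ = ψ (y, 0) + ψ (0, m) := rfl
    _ = ψ (y, m) := by rw [← map_add]; simp

section Topology

theorem isClosedEmbedding_sumElim_intCast (ι κ : Type*) :
    IsClosedEmbedding fun z : (ι → ℝ) × (κ → ℤ) => Sum.elim z.1 fun k => (z.2 k : ℝ) :=
  Homeomorph.sumArrowHomeomorphProdArrow.symm.isClosedEmbedding.comp
    (IsClosedEmbedding.id.prodMap (.piMap fun _ => Int.isClosedEmbedding_coe_real))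

theorem linearIndependent_real_of_isEmbedding_linearCombination_int [NormedAddCommGroup E]
    [NormedSpace ℝ E] [FiniteDimensional ℝ E] {c : ι → E}
    (hc : IsEmbedding (Fintype.linearCombination ℤ c)) : LinearIndependent ℝ c := by
  have hdiscrete : DiscreteTopology (Submodule.span ℤ (range c)) := by
    rw [← Fintype.range_linearCombination]
    exact hc.toHomeomorph.discreteTopology
  have hZ : LinearIndependent ℤ c :=
    linearIndependent_iff_injective_fintypeLinearCombination.2 hc.injective
  rw [linearIndependent_iff_card_eq_finrank_span] at hZ ⊢
  rw [hZ, Real.finrank_eq_int_finrank_of_discrete hdiscrete]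

variable [NormedAddCommGroup E] [NormedSpace ℝ E] [FiniteDimensional ℝ E]

theorem isClosedEmbedding_mixedCombination_iff {c : ι ⊕ κ → E} :
    IsClosedEmbedding (mixedCombination c) ↔ LinearIndependent ℝ c := by
  refine ⟨fun h => ?_, fun hc => ?_⟩
  · apply linearIndependent_real_of_isEmbedding_linearCombination_int
    have hint : IsEmbedding fun a : ι ⊕ κ → ℤ => ((fun i => (a (.inl i) : ℝ)), a ∘ Sum.inr) :=
      ((IsEmbedding.piMap fun _ => Int.isClosedEmbedding_coe_real.isEmbedding).prodMap .id).comp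
        Homeomorph.sumArrowHomeomorphProdArrow.isEmbedding
    convert h.isEmbedding.comp hint using 1
    ext a
    simp [mixedCombination_apply, Fintype.linearCombination_apply, Int.cast_smul_eq_zsmul]
  · exact (LinearMap.isClosedEmbedding_of_injective
      (LinearMap.ker_eq_bot.2 hc.fintypeLinearCombination_injective)).comp
      (isClosedEmbedding_sumElim_intCast ι κ)

end Topology

end MixedCombination

theorem exists_isClosedEmbedding_range_eq_iff {A G : Type*} [AddGroup A] [TopologicalSpace A]
    [AddGroup G] [TopologicalSpace G] {Γ : AddSubgroup G} (hΓ : IsClosed (Γ : Set G)) :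
    (∃ ψ : A →+ G, IsClosedEmbedding ψ ∧ ψ.range = Γ) ↔ Nonempty (Γ ≃ₜ+ A) := by
  constructor
  · rintro ⟨ψ, hψ, rfl⟩
    let e : A ≃+ ψ.range := AddMonoidHom.ofInjective hψ.injective
    have he : Continuous e := hψ.continuous.subtype_mk _
    have he' : Continuous e.symm := hψ.isEmbedding.continuous_iff.2 <|
      continuous_subtype_val.congr fun x => congrArg Subtype.val (e.apply_symm_apply x).symm
    exact ⟨(⟨e, he, he'⟩ : A ≃ₜ+ ψ.range).symm⟩
  · rintro ⟨e⟩
    refine ⟨Γ.subtype.comp (e.symm : A →+ Γ),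
      hΓ.isClosedEmbedding_subtypeVal.comp e.symm.toHomeomorph.isClosedEmbedding, ?_⟩
    rw [AddMonoidHom.range_comp, AddMonoidHom.range_eq_top.2 e.symm.surjective,
      ← AddMonoidHom.range_eq_map, AddSubgroup.range_subtype]

section Stratum

variable {n : ℕ} {ι κ : Type*} [Fintype ι] [Fintype κ] {Γ : ChabautyPoint n}

theorem mem_stratum_iff_nonempty_continuousAddEquiv :
    Γ ∈ stratum n (Fintype.card ι) (Fintype.card κ) ↔
      Nonempty (Γ.1 ≃ₜ+ (ι → ℝ) × (κ → ℤ)) := by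
  let ρ := ((ContinuousLinearEquiv.piCongrLeft ℤ (fun _ => ℝ) (Fintype.equivFin ι)).prodCongr
    (ContinuousLinearEquiv.piCongrLeft ℤ (fun _ => ℤ) (Fintype.equivFin κ))).toContinuousAddEquiv
  constructor
  · rintro ⟨e, he, he'⟩
    exact ⟨(⟨e, he, he'⟩ : Γ.1 ≃ₜ+ _).trans ρ.symm⟩
  · rintro ⟨e⟩
    let e' := e.trans ρ
    exact ⟨e'.toAddEquiv, e'.continuous_toFun, e'.continuous_invFun⟩

theorem mem_stratum_iff_exists_linearIndependent :
    Γ ∈ stratum n (Fintype.card ι) (Fintype.card κ) ↔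
      ∃ c : ι ⊕ κ → Euc n, LinearIndependent ℝ c ∧ (mixedCombination c).range = Γ.1 := by
  rw [mem_stratum_iff_nonempty_continuousAddEquiv, ← exists_isClosedEmbedding_range_eq_iff Γ.2]
  constructor
  · rintro ⟨ψ, hψ, hrange⟩
    obtain ⟨c, rfl⟩ := exists_mixedCombination_eq ψ hψ.continuous
    exact ⟨c, isClosedEmbedding_mixedCombination_iff.1 hψ, hrange⟩
  · rintro ⟨c, hc, hrange⟩
    exact ⟨_, isClosedEmbedding_mixedCombination_iff.2 hc, hrange⟩

/-- The closed subgroup generated by the real multiples of the vectors `c (inl i)` and the integer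
multiples of the vectors `c (inr k)`, for a linearly independent family `c`. -/
def mixedPoint (c : ι ⊕ κ → Euc n) (hc : LinearIndependent ℝ c) : ChabautyPoint n :=
  ⟨(mixedCombination c).range, (isClosedEmbedding_mixedCombination_iff.2 hc).isClosed_range⟩

theorem mixedPoint_mem_stratum {c : ι ⊕ κ → Euc n} (hc : LinearIndependent ℝ c) :
    mixedPoint c hc ∈ stratum n (Fintype.card ι) (Fintype.card κ) :=
  mem_stratum_iff_exists_linearIndependent.2 ⟨c, hc, rfl⟩

theorem exists_mixedPoint_eq_of_mem_stratum
    (hΓ : Γ ∈ stratum n (Fintype.card ι) (Fintype.card κ)) :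
    ∃ (c : ι ⊕ κ → Euc n) (hc : LinearIndependent ℝ c), mixedPoint c hc = Γ := by
  obtain ⟨c, hc, hrange⟩ := mem_stratum_iff_exists_linearIndependent.1 hΓ
  exact ⟨c, hc, Subtype.ext hrange⟩

theorem stratum_nonempty {p q : ℕ} (hpq : p + q ≤ n) : (stratum n p q).Nonempty := by
  obtain ⟨c, hc⟩ := exists_linearIndependent_of_le_finrank (R := ℝ) (M := Euc n)
    (hpq.trans_eq finrank_euclideanSpace_fin.symm)
  exact ⟨_, by simpa using mixedPoint_mem_stratum (hc.comp _ finSumFinEquiv.injective)⟩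

theorem finrank_lineality_of_mem_stratum {p q : ℕ} (hΓ : Γ ∈ stratum n p q) :
    finrank ℝ (lineality Γ.1) = p := by
  obtain ⟨c, hc, rfl⟩ := exists_mixedPoint_eq_of_mem_stratum (ι := Fin p) (κ := Fin q)
    (by simpa using hΓ)
  rw [mixedPoint, lineality_range_mixedCombination hc,
    finrank_span_eq_card (hc.comp _ Sum.inl_injective), Fintype.card_fin]

theorem finrank_span_of_mem_stratum {p q : ℕ} (hΓ : Γ ∈ stratum n p q) :
    finrank ℝ (Submodule.span ℝ (Γ.1 : Set (Euc n))) = p + q := by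
  obtain ⟨c, hc, rfl⟩ := exists_mixedPoint_eq_of_mem_stratum (ι := Fin p) (κ := Fin q)
    (by simpa using hΓ)
  rw [mixedPoint, span_range_mixedCombination, finrank_span_eq_card hc, Fintype.card_sum,
    Fintype.card_fin, Fintype.card_fin]

theorem le_of_mem_closure_stratum {p q r s : ℕ} (hΓ : Γ ∈ stratum n p q)
    (hcl : Γ ∈ closure (stratum n r s)) : r ≤ p ∧ p + q ≤ r + s := by
  have hfreq := mem_closure_iff_frequently.1 hcl
  constructor
  · by_contra! hlt
    have hnear := ChabautyPoint.upperSemicontinuous_finrank_lineality Γ r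
      (by simpa only [finrank_lineality_of_mem_stratum hΓ] using hlt)
    obtain ⟨Δ, hΔ, hΔlt⟩ := (hfreq.and_eventually hnear).exists
    exact hΔlt.ne (finrank_lineality_of_mem_stratum hΔ)
  · by_contra! hlt
    have hnear := ChabautyPoint.lowerSemicontinuous_finrank_span Γ (r + s)
      (by simpa only [finrank_span_of_mem_stratum hΓ] using hlt)
    obtain ⟨Δ, hΔ, hΔlt⟩ := (hfreq.and_eventually hnear).exists
    exact hΔlt.ne' (finrank_span_of_mem_stratum hΔ)

end Stratum

section RescaleTail

variable {ι α κ E : Type*} [AddCommGroup E] [Module ℝ E]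

/-- The family obtained from `c` by rescaling all vectors outside the first block and regrouping,
so that the middle block `α` moves from the first summand to the second. -/
def rescaleTail (c : (ι ⊕ α) ⊕ κ → E) (w : α ⊕ κ → ℝ) : ι ⊕ (α ⊕ κ) → E :=
  Sum.elim (fun i => c (.inl (.inl i))) fun k => w k • c ((Equiv.sumAssoc ι α κ).symm (.inr k))

theorem linearIndependent_rescaleTail {c : (ι ⊕ α) ⊕ κ → E} (hc : LinearIndependent ℝ c)
    {w : α ⊕ κ → ℝ} (hw : ∀ k, w k ≠ 0) : LinearIndependent ℝ (rescaleTail c w) := by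
  convert (hc.comp _ (Equiv.sumAssoc ι α κ).symm.injective).units_smul
    (Sum.elim 1 fun k => Units.mk0 (w k) (hw k)) using 1
  ext (i | k) <;> simp [rescaleTail, Units.smul_def]

theorem mixedCombination_rescaleTail [Fintype ι] [Fintype α] [Fintype κ] (c : (ι ⊕ α) ⊕ κ → E)
    (w : α ⊕ κ → ℝ) (y : ι → ℝ) (m : α ⊕ κ → ℤ) :
    mixedCombination (rescaleTail c w) (y, m) = Fintype.linearCombination ℝ c
      (Sum.elim (Sum.elim y fun a => m (.inl a) * w (.inl a))
        fun k => m (.inr k) * w (.inr k)) := by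
  simp [mixedCombination_apply, Fintype.linearCombination_apply, rescaleTail, smul_smul, add_assoc]

end RescaleTail

theorem exists_linearIndependent_sumElim {K V ι : Type*} [DivisionRing K] [AddCommGroup V]
    [Module K V] [FiniteDimensional K V] [Fintype ι] {c : ι → V} (hc : LinearIndependent K c)
    {b : ℕ} (hb : Fintype.card ι + b ≤ finrank K V) :
    ∃ u : Fin b → V, LinearIndependent K (Sum.elim c u) := by
  obtain ⟨W, hW⟩ := (Submodule.span K (range c)).exists_isCompl
  have hbW : b ≤ finrank K W := by
    rw [← Submodule.finrank_add_eq_of_isCompl hW, finrank_span_eq_card hc] at hb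
    exact le_of_add_le_add_left hb
  obtain ⟨u, hu⟩ := exists_linearIndependent_of_le_finrank hbW
  refine ⟨W.subtype ∘ u, hc.sum_type (hu.map' _ W.ker_subtype) (hW.disjoint.mono_right ?_)⟩
  exact Submodule.span_le.2 (range_subset_iff.2 fun i => (u i).2)

theorem exists_norm_apply_le_mul_norm_linearCombination {𝕜 E ι : Type*}
    [NontriviallyNormedField 𝕜] [CompleteSpace 𝕜] [NormedAddCommGroup E] [NormedSpace 𝕜 E]
    [Fintype ι] {c : ι → E} (hc : LinearIndependent 𝕜 c) :
    ∃ C : ℝ, 0 ≤ C ∧ ∀ (z : ι → 𝕜) (i : ι), ‖z i‖ ≤ C * ‖Fintype.linearCombination 𝕜 c z‖ := by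
  obtain ⟨C, -, hC⟩ := (Fintype.linearCombination 𝕜 c).exists_antilipschitzWith
    (LinearMap.ker_eq_bot.2 hc.fintypeLinearCombination_injective)
  exact ⟨C, C.2, fun z i =>
    (norm_le_pi_norm z i).trans (ZeroHomClass.bound_of_antilipschitz _ hC z)⟩

namespace ChabautyPoint

variable {n : ℕ} {ι α κ β : Type*} [Fintype ι] [Fintype α] [Fintype κ] {l : Filter β}
  {Δ : β → ChabautyPoint n} {Γ : ChabautyPoint n} {w : β → ℝ}

theorem tendsto_of_range_rescaleTail_of_tendsto_zero {c : (ι ⊕ α) ⊕ κ → Euc n}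
    (hΔ : ∀ t, (Δ t).1 = (mixedCombination (rescaleTail c (Sum.elim (fun _ => w t) 1))).range)
    (hΓ : Γ.1 = (mixedCombination c).range) (hw : Tendsto w l (𝓝[>] 0)) :
    Tendsto Δ l (𝓝 Γ) := by
  refine tendsto_of_eventually_mem_of_exists_tendsto (fun R => .of_forall fun t x hx _ => ?_) ?_
  · rw [hΔ t] at hx
    obtain ⟨⟨y, m⟩, rfl⟩ := hx
    rw [hΓ, mixedCombination_rescaleTail]
    exact ⟨(Sum.elim y fun a => m (.inl a) * w t, m ∘ .inr), by simp [mixedCombination_apply]⟩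
  · intro x hx
    rw [hΓ] at hx
    obtain ⟨⟨y, m⟩, rfl⟩ := hx
    let z (t : β) : α ⊕ κ → ℤ := Sum.elim (fun a => ⌊y (.inr a) / w t⌋) m
    refine ⟨fun t => mixedCombination (rescaleTail c (Sum.elim (fun _ => w t) 1))
      (y ∘ .inl, z t), .of_forall fun t => hΔ t ▸ ⟨_, rfl⟩, ?_⟩
    simp only [mixedCombination_rescaleTail]
    refine ((Fintype.linearCombination ℝ c).continuous_of_finiteDimensional.tendsto _).comp
      (tendsto_pi_nhds.2 ?_)
    rintro ((i | a) | k)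
    · exact tendsto_const_nhds
    · exact (tendsto_floor_div_mul_nhdsGT_zero (y (.inr a))).comp hw
    · simpa [z] using tendsto_const_nhds

theorem tendsto_of_range_rescaleTail_of_tendsto_atTop {c : (ι ⊕ κ) ⊕ α → Euc n}
    (hc : LinearIndependent ℝ c)
    (hΔ : ∀ t, (Δ t).1 = (mixedCombination (rescaleTail c (Sum.elim 1 fun _ => w t))).range)
    (hΓ : Γ.1 = (mixedCombination (c ∘ .inl)).range) (hw : Tendsto w l atTop) :
    Tendsto Δ l (𝓝 Γ) := by
  refine tendsto_of_eventually_mem_of_exists_tendsto ?_ fun x hx =>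
    ⟨fun _ => x, .of_forall fun t => ?_, tendsto_const_nhds⟩
  · intro R
    obtain ⟨C, hC₀, hC⟩ := exists_norm_apply_le_mul_norm_linearCombination hc
    filter_upwards [hw.eventually_gt_atTop (C * R), hw.eventually_gt_atTop 0] with t hlarge hpos
    intro x hx hxR
    rw [hΔ t] at hx
    obtain ⟨⟨y, m⟩, rfl⟩ := hx
    have hm (a : α) : m (.inr a) = 0 := by
      rw [mixedCombination_rescaleTail] at hxR
      have hcoord : ‖(m (.inr a) : ℝ) * w t‖ < 1 * w t :=
        calc ‖(m (.inr a) : ℝ) * w t‖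
            ≤ _ := hC (Sum.elim _ fun a => (m (.inr a) : ℝ) * w t) (.inr a)
          _ ≤ C * R := mul_le_mul_of_nonneg_left hxR hC₀
          _ < 1 * w t := by rwa [one_mul]
      rw [norm_mul, Real.norm_of_nonneg hpos.le, mul_lt_mul_iff_left₀ hpos,
        Real.norm_eq_abs] at hcoord
      exact Int.abs_lt_one_iff.1 (by exact_mod_cast hcoord)
    rw [hΓ, mixedCombination_rescaleTail]
    exact ⟨(y, m ∘ .inl), by
      simp [mixedCombination_apply, Fintype.linearCombination_apply, hm]⟩
  · rw [hΓ] at hx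
    obtain ⟨⟨y, m⟩, rfl⟩ := hx
    rw [hΔ t]
    refine ⟨(y, Sum.elim m 0), ?_⟩
    rw [mixedCombination_rescaleTail]
    simp [mixedCombination_apply, Fintype.linearCombination_apply]

end ChabautyPoint

section Closure

variable {n : ℕ}

theorem stratum_add_subset_closure (r a q : ℕ) :
    stratum n (r + a) q ⊆ closure (stratum n r (a + q)) := by
  intro Γ hΓ
  obtain ⟨c, hc, rfl⟩ := exists_mixedPoint_eq_of_mem_stratum (ι := Fin r ⊕ Fin a) (κ := Fin q)
    (by simpa using hΓ)
  let δ (t : ℕ) : ℝ := 1 / (t + 1)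
  have hδ (t : ℕ) : 0 < δ t := Nat.one_div_pos_of_nat
  have hli (t : ℕ) : LinearIndependent ℝ (rescaleTail c (Sum.elim (fun _ => δ t) 1)) :=
    linearIndependent_rescaleTail hc (by simp [(hδ t).ne'])
  refine mem_closure_of_tendsto (f := fun t => mixedPoint _ (hli t)) (b := atTop) ?_
    (.of_forall fun t => by simpa using mixedPoint_mem_stratum (hli t))
  exact ChabautyPoint.tendsto_of_range_rescaleTail_of_tendsto_zero (fun _ => rfl) rfl
    (tendsto_nhdsWithin_iff.2 ⟨tendsto_one_div_add_atTop_nhds_zero_nat, .of_forall hδ⟩)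

theorem stratum_subset_closure_stratum_add {p q b : ℕ} (hb : p + q + b ≤ n) :
    stratum n p q ⊆ closure (stratum n p (q + b)) := by
  intro Γ hΓ
  obtain ⟨c, hc, rfl⟩ := exists_mixedPoint_eq_of_mem_stratum (ι := Fin p) (κ := Fin q)
    (by simpa using hΓ)
  obtain ⟨u, hu⟩ := exists_linearIndependent_sumElim hc (b := b) (by simpa using hb)
  have hli (t : ℕ) :
      LinearIndependent ℝ (rescaleTail (Sum.elim c u) (Sum.elim 1 fun _ => (t + 1 : ℝ))) :=
    linearIndependent_rescaleTail hu (by simp [t.cast_add_one_ne_zero])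
  refine mem_closure_of_tendsto (f := fun t => mixedPoint _ (hli t)) (b := atTop) ?_
    (.of_forall fun t => by simpa using mixedPoint_mem_stratum (hli t))
  exact ChabautyPoint.tendsto_of_range_rescaleTail_of_tendsto_atTop hu (fun _ => rfl) rfl
    (tendsto_atTop_add_const_right _ 1 tendsto_natCast_atTop_atTop)

theorem mem_closure_stratum_iff {p q r s : ℕ} (hrs : r + s ≤ n) {Γ : ChabautyPoint n}
    (hΓ : Γ ∈ stratum n p q) : Γ ∈ closure (stratum n r s) ↔ r ≤ p ∧ p + q ≤ r + s := by
  refine ⟨le_of_mem_closure_stratum hΓ, fun ⟨hrp, hle⟩ => ?_⟩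
  obtain ⟨a, rfl⟩ := Nat.exists_eq_add_of_le hrp
  rw [add_assoc] at hle
  obtain ⟨b, rfl⟩ := Nat.exists_eq_add_of_le (le_of_add_le_add_left hle)
  have hlong : stratum n r (a + q) ⊆ closure (stratum n r (a + q + b)) :=
    stratum_subset_closure_stratum_add (by rwa [add_assoc])
  exact closure_minimal hlong isClosed_closure (stratum_add_subset_closure r a q hΓ)

end Closure

/-- Frontier condition: 𝒞^{(p,q)} ⊆ closure 𝒞^{(r,s)} iff r ≤ p and p + q ≤ r + s. -/
theorem stratum_closure_iff (n p q r s : ℕ) (hpq : p + q ≤ n) (hrs : r + s ≤ n) :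
    stratum n p q ⊆ closure (stratum n r s) ↔ (r ≤ p ∧ p + q ≤ r + s) := by
  constructor
  · intro hsub
    obtain ⟨Γ, hΓ⟩ := stratum_nonempty hpq
    exact le_of_mem_closure_stratum hΓ (hsub hΓ)
  · exact fun h Γ hΓ => (mem_closure_stratum_iff hrs hΓ).2 h
end
end

section
/- The set 𝒞₁ of closed subgroups of ℝ² with covolume 1 (i.e., the closure in the Chabauty topology of the set of unit-covolume lattices) is homeomorphic to the set 𝒞¹ of closed subgroups of ℝ² whose shortest nonzero vector has norm 1, via the map sending Γ ∈ 𝒞¹ to the unique rescaling tΓ of unit covolume. -/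
open scoped Pointwise

noncomputable section

/-- A lattice in ℝ²: a discrete subgroup spanning ℝ² (equivalently, isomorphic to ℤ²). -/
def IsLattice (Γ : AddSubgroup (Euc 2)) : Prop :=
  DiscreteTopology Γ ∧ Submodule.span ℝ (Γ : Set (Euc 2)) = ⊤

/-- Γ has covolume one: it is generated by two vectors with determinant ±1. -/
def UnitCovolume (Γ : AddSubgroup (Euc 2)) : Prop :=
  ∃ v w : Euc 2, AddSubgroup.closure {v, w} = Γ ∧ |v 0 * w 1 - v 1 * w 0| = 1

/-- 𝒞₁ : the closure of the set of unit-covolume lattices in the Chabauty space of ℝ². -/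
def covolOne : Set (ChabautyPoint 2) :=
  closure {Γ : ChabautyPoint 2 | IsLattice Γ.1 ∧ UnitCovolume Γ.1}

/-- 𝒞¹ : the set of closed subgroups of ℝ² whose shortest nonzero vector has norm 1. -/
def normOne : Set (ChabautyPoint 2) :=
  {Γ : ChabautyPoint 2 | ∃ x ∈ Γ.1, ‖x‖ = 1 ∧ ∀ y ∈ Γ.1, y ≠ 0 → 1 ≤ ‖y‖}

/-!
A group in `𝒞¹` has a Gauss-reduced basis: a shortest vector `v`, of norm `1`, and a second vector
`a v + r⁻² J v` with `|a| ≤ 1 / 2`, where `J` is the rotation by a right angle. As the second vector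
goes to infinity `r` tends to `0`, so that the parameters `(v, a, r)`, with `r = 0` for the groups
`ℤ v`, form a compact set. The group of parameters `(v, a, r)` has covolume `r⁻²`, hence its
rescaling of covolume one is its dilation by `r`, which converges to the line `ℝ v` as `r` tends
to `0`. Both families of groups depend continuously on `(v, a, r)`, and they identify the same
parameters: `r` is read off either group, as its covolume or as the length of its shortest vectors.
So their images `𝒞¹` and `𝒞₁` are the same quotient of a compact space.
-/

open Filter Metric Set Topology

section Topology

variable {P Q X Y : Type*} [TopologicalSpace P] [TopologicalSpace Q] [TopologicalSpace X]
  [TopologicalSpace Y]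

theorem exists_homeomorph_image_of_isCompact [T2Space X] [T2Space Y] {K : Set P}
    (hK : IsCompact K) {f : P → X} {g : P → Y} (hf : ContinuousOn f K) (hg : ContinuousOn g K)
    (hfg : ∀ p ∈ K, ∀ q ∈ K, f p = f q ↔ g p = g q) :
    ∃ Φ : f '' K ≃ₜ g '' K, ∀ p : K, Φ (K.imageFactorization f p) = K.imageFactorization g p := by
  have : CompactSpace K := isCompact_iff_compactSpace.1 hK
  have : CompactSpace (f '' K) := isCompact_iff_compactSpace.1 (hK.image_of_continuousOn hf)
  let F : C(K, f '' K) := ⟨K.imageFactorization f, hf.domRestrict.subtype_mk _⟩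
  let G : C(K, g '' K) := ⟨K.imageFactorization g, hg.domRestrict.subtype_mk _⟩
  have hF : IsQuotientMap F := .of_surjective_continuous imageFactorization_surjective F.continuous
  have hker : ∀ p q, F p = F q ↔ G p = G q := fun p q =>
    ⟨fun h => Subtype.ext ((hfg p p.2 q q.2).1 (congrArg Subtype.val h)),
      fun h => Subtype.ext ((hfg p p.2 q q.2).2 (congrArg Subtype.val h))⟩
  let Φ := hF.lift G fun p q => (hker p q).1
  have hΦ : ∀ p, Φ (F p) = G p := DFunLike.congr_fun (hF.lift_comp G fun p q => (hker p q).1)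
  have hbij : Function.Bijective Φ := by
    refine ⟨hF.surjective.forall₂.2 fun p q h => (hker p q).2 ?_, fun y => ?_⟩
    · rwa [hΦ, hΦ] at h
    · obtain ⟨p, rfl⟩ := imageFactorization_surjective y
      exact ⟨F p, hΦ p⟩
  exact ⟨(isHomeomorph_iff_continuous_bijective.2 ⟨Φ.continuous, hbij⟩).homeomorph, hΦ⟩

/-- Continuity of a family of closed sets for the Fell topology, split into its two halves: points
of nearby members accumulate only at points of `F p`, and every point of `F p` is approximated by
points of nearby members. -/
structure FellContinuous (F : P → Set X) : Prop where
  isClosed_graph : IsClosed {q : P × X | q.2 ∈ F q.1}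
  lowerHemicontinuous : LowerHemicontinuous F

namespace FellContinuous

variable {F : P → Set X} {G : P → Set Y}

theorem isClosed (hF : FellContinuous F) (p : P) : IsClosed (F p) :=
  hF.isClosed_graph.preimage (Continuous.prodMk_right p)

theorem eventually_nonempty_inter (hF : FellContinuous F) {p : P} {x : X} (hx : x ∈ F p)
    {U : Set X} (hU : U ∈ 𝓝 x) : ∀ᶠ q in 𝓝 p, (F q ∩ U).Nonempty := by
  obtain ⟨V, hVU, hV, hxV⟩ := mem_nhds_iff.1 hU
  filter_upwards [(lowerHemicontinuous_iff_isOpen_inter_nonempty.1 hF.lowerHemicontinuous V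
    hV).mem_nhds ⟨x, hx, hxV⟩] with q hq
  exact hq.mono (inter_subset_inter_right _ hVU)

theorem of_eventually_nonempty_inter (hF : IsClosed {q : P × X | q.2 ∈ F q.1})
    (h : ∀ p, ∀ x ∈ F p, ∀ U ∈ 𝓝 x, ∀ᶠ q in 𝓝 p, (F q ∩ U).Nonempty) : FellContinuous F := by
  refine ⟨hF, lowerHemicontinuous_iff_isOpen_inter_nonempty.2 fun U hU => ?_⟩
  exact isOpen_iff_mem_nhds.2 fun p ⟨x, hx, hxU⟩ => h p x hx U (hU.mem_nhds hxU)

theorem comp (hF : FellContinuous F) {u : Q → P} (hu : Continuous u) :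
    FellContinuous fun q => F (u q) :=
  ⟨hF.isClosed_graph.preimage (hu.prodMap continuous_id), hF.lowerHemicontinuous.comp hu⟩

theorem prod (hF : FellContinuous F) (hG : FellContinuous G) :
    FellContinuous fun p => F p ×ˢ G p := by
  refine of_eventually_nonempty_inter ?_ fun p ⟨x, y⟩ ⟨hx, hy⟩ W hW => ?_
  · have hfst : Continuous fun q : P × X × Y => (q.1, q.2.1) := by fun_prop
    have hsnd : Continuous fun q : P × X × Y => (q.1, q.2.2) := by fun_prop
    exact (hF.isClosed_graph.preimage hfst).inter (hG.isClosed_graph.preimage hsnd)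
  · obtain ⟨U, hU, V, hV, hUV⟩ := mem_nhds_prod_iff.1 hW
    filter_upwards [hF.eventually_nonempty_inter hx hU, hG.eventually_nonempty_inter hy hV]
      with q ⟨x', hx', hxU⟩ ⟨y', hy', hyV⟩
    exact ⟨(x', y'), ⟨hx', hy'⟩, hUV ⟨hxU, hyV⟩⟩

theorem preimage {φ : P → Y → X} {ψ : P → X → Y} (hF : FellContinuous F)
    (hφ : Continuous fun q : P × Y => φ q.1 q.2) (hψ : Continuous fun q : P × X => ψ q.1 q.2)
    (hψφ : ∀ p, Function.LeftInverse (ψ p) (φ p))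
    (hφψ : ∀ p, Function.RightInverse (ψ p) (φ p)) :
    FellContinuous fun p => φ p ⁻¹' F p := by
  refine of_eventually_nonempty_inter ?_ fun p y hy U hU => ?_
  · exact hF.isClosed_graph.preimage (continuous_fst.prodMk hφ)
  · have hU' : (fun q : P × X => ψ q.1 q.2) ⁻¹' U ∈ 𝓝 (p, φ p y) :=
      hψ.continuousAt.preimage_mem_nhds (by rwa [hψφ p y])
    obtain ⟨A, hA, B, hB, hAB⟩ := mem_nhds_prod_iff.1 hU'
    filter_upwards [hA, hF.eventually_nonempty_inter hy hB] with q hqA ⟨x, hx, hxB⟩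
    exact ⟨ψ q x, by rwa [mem_preimage, hφψ q x], hAB (mk_mem_prod hqA hxB)⟩

end FellContinuous

end Topology

section Chabauty

variable {n : ℕ}

theorem isOpen_setOf_inter_eq_empty {K : Set (Euc n)} (hK : IsCompact K) :
    IsOpen {Γ : ChabautyPoint n | (Γ.1 : Set (Euc n)) ∩ K = ∅} :=
  .basic _ (.inl ⟨K, hK, rfl⟩)

theorem isOpen_setOf_inter_nonempty {U : Set (Euc n)} (hU : IsOpen U) :
    IsOpen {Γ : ChabautyPoint n | ((Γ.1 : Set (Euc n)) ∩ U).Nonempty} :=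
  .basic _ (.inr ⟨U, hU, rfl⟩)

theorem separatedNhds_of_not_le {Γ Δ : ChabautyPoint n} (h : ¬ Γ.1 ≤ Δ.1) :
    SeparatedNhds {Γ} {Δ} := by
  obtain ⟨x, hxΓ, hxΔ⟩ := SetLike.not_le_iff_exists.1 h
  obtain ⟨ε, hε, hball⟩ := nhds_basis_closedBall.mem_iff.1 (Δ.2.isOpen_compl.mem_nhds hxΔ)
  refine ⟨_, _, isOpen_setOf_inter_nonempty (isOpen_ball (x := x) (ε := ε)),
    isOpen_setOf_inter_eq_empty (isCompact_closedBall x ε), ?_, ?_, ?_⟩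
  · exact singleton_subset_iff.2 ⟨x, hxΓ, mem_ball_self hε⟩
  · exact singleton_subset_iff.2 (eq_empty_of_forall_notMem fun y hy => hball hy.2 hy.1)
  · exact disjoint_left.2 fun Λ ⟨y, hyΛ, hy⟩ hΛ =>
      eq_empty_iff_forall_notMem.1 hΛ y ⟨hyΛ, ball_subset_closedBall hy⟩

instance instT2SpaceChabautyPoint : T2Space (ChabautyPoint n) := by
  refine ⟨fun Γ Δ hne => ?_⟩
  have hsep : SeparatedNhds {Γ} {Δ} := by
    by_cases hle : Γ.1 ≤ Δ.1
    · refine (separatedNhds_of_not_le fun hge => hne ?_).symm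
      exact Subtype.ext (le_antisymm hle hge)
    · exact separatedNhds_of_not_le hle
  obtain ⟨U, V, hU, hV, hΓ, hΔ, hUV⟩ := hsep
  exact ⟨U, V, hU, hV, hΓ rfl, hΔ rfl, hUV⟩

theorem FellContinuous.continuous_chabauty {P : Type*} [TopologicalSpace P]
    {f : P → ChabautyPoint n} (hf : FellContinuous fun p => ((f p).1 : Set (Euc n))) :
    Continuous f := by
  refine continuous_generateFrom_iff.2 ?_
  rintro _ (⟨K, hK, rfl⟩ | ⟨U, hU, rfl⟩)
  · have : CompactSpace K := isCompact_iff_compactSpace.1 hK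
    have hgraph : IsClosed {q : P × K | (q.2 : Euc n) ∈ (f q.1).1} :=
      hf.isClosed_graph.preimage (continuous_id.prodMap continuous_subtype_val)
    convert (isClosedMap_fst_of_compactSpace _ hgraph).isOpen_compl using 1
    ext p
    simp [eq_empty_iff_forall_notMem, imp_not_comm]
  · exact lowerHemicontinuous_iff_isOpen_inter_nonempty.1 hf.lowerHemicontinuous U hU

end Chabauty

section Periods

open AddSubgroup

/-- The subgroup `ℤ s` of `ℝ`, except that spacing `s = 0` gives `ℝ`, the limit of `ℤ s` as `s`
tends to `0`. -/
def periods (s : ℝ) : AddSubgroup ℝ :=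
  if s = 0 then ⊤ else zmultiples s

@[simp]
theorem periods_zero : periods 0 = ⊤ :=
  if_pos rfl

theorem periods_of_ne_zero {s : ℝ} (hs : s ≠ 0) : periods s = zmultiples s :=
  if_neg hs

theorem mem_periods_iff {s c : ℝ} : c ∈ periods s ↔ s = 0 ∨ c / s ∈ range ((↑) : ℤ → ℝ) := by
  rcases eq_or_ne s 0 with rfl | hs
  · simp
  · simp [periods_of_ne_zero hs, mem_zmultiples_iff, hs, eq_div_iff]

theorem exists_mem_periods_abs_sub_le (s c : ℝ) : ∃ c' ∈ periods s, |c - c'| ≤ |s| / 2 := by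
  rcases eq_or_ne s 0 with rfl | hs
  · exact ⟨c, by simp⟩
  · refine ⟨round (c / s) * s, mem_periods_iff.2 (.inr ⟨round (c / s), by field_simp⟩), ?_⟩
    calc |c - round (c / s) * s| = |c / s - round (c / s)| * |s| := by
          rw [← abs_mul, sub_mul, div_mul_cancel₀ c hs]
      _ ≤ 1 / 2 * |s| := by gcongr; exact abs_sub_round _
      _ = |s| / 2 := by ring

theorem mem_zmultiples_inv_iff {d h : ℝ} :
    h ∈ zmultiples d⁻¹ ↔ h = 0 ∨ d * h ∈ ((↑) : ℤ → ℝ) '' {0}ᶜ := by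
  rcases eq_or_ne d 0 with rfl | hd
  · simp
  · rw [mem_zmultiples_iff]
    constructor
    · rintro ⟨k, rfl⟩
      rcases eq_or_ne k 0 with rfl | hk
      · simp
      · exact .inr ⟨k, hk, by simp [field]⟩
    · rintro (rfl | ⟨k, -, hk⟩)
      · exact ⟨0, by simp⟩
      · exact ⟨k, by rw [zsmul_eq_mul, hk]; field_simp⟩

theorem fellContinuous_periods : FellContinuous fun s => (periods s : Set ℝ) := by
  refine .of_eventually_nonempty_inter ?_ fun s c hc U hU => ?_
  · refine isOpen_compl_iff.1 (isOpen_iff_mem_nhds.2 fun ⟨s, c⟩ hsc => ?_)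
    have hsc' : s ≠ 0 ∧ c / s ∉ range ((↑) : ℤ → ℝ) :=
      not_or.1 fun h => hsc (mem_periods_iff.2 h)
    have hdiv : ContinuousAt (fun q : ℝ × ℝ => q.2 / q.1) (s, c) :=
      continuousAt_snd.div continuousAt_fst hsc'.1
    filter_upwards [continuousAt_fst.eventually_ne hsc'.1,
      hdiv.eventually (Int.isClosedEmbedding_coe_real.isClosed_range.isOpen_compl.mem_nhds hsc'.2)]
      with q hq hq' hmem
    exact (mem_periods_iff.1 hmem).elim hq hq'
  · rcases eq_or_ne s 0 with rfl | hs
    · obtain ⟨ε, hε, hεU⟩ := Metric.mem_nhds_iff.1 hU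
      filter_upwards [ball_mem_nhds (0 : ℝ) hε] with s hsε
      obtain ⟨c', hc', hcc'⟩ := exists_mem_periods_abs_sub_le s c
      refine ⟨c', hc', hεU ?_⟩
      rw [mem_ball_zero_iff, Real.norm_eq_abs] at hsε
      rw [mem_ball_comm, mem_ball, Real.dist_eq]
      linarith
    · obtain ⟨m, hm⟩ := mem_zmultiples_iff.1 (periods_of_ne_zero hs ▸ hc)
      have hlim : ContinuousAt (fun t : ℝ => m • t) s := by fun_prop
      filter_upwards [eventually_ne_nhds hs, hlim.preimage_mem_nhds (by simpa [hm] using hU)]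
        with t ht htU
      exact ⟨m • t, periods_of_ne_zero ht ▸ zsmul_mem_zmultiples t m, htU⟩

theorem fellContinuous_zmultiples_inv : FellContinuous fun d : ℝ => (zmultiples d⁻¹ : Set ℝ) := by
  refine .of_eventually_nonempty_inter ?_ fun d h hh U hU => ?_
  · have hclosed : IsClosed (((↑) : ℤ → ℝ) '' {0}ᶜ) :=
      Int.isClosedEmbedding_coe_real.isClosedMap _ (isClosed_discrete _)
    simp only [SetLike.mem_coe, mem_zmultiples_inv_iff, ofPred_or]
    exact (isClosed_eq continuous_snd continuous_const).union
      (hclosed.preimage (continuous_fst.mul continuous_snd))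
  · obtain ⟨k, rfl⟩ := mem_zmultiples_iff.1 hh
    rcases eq_or_ne d 0 with rfl | hd
    · exact .of_forall fun e => ⟨0, zero_mem _, mem_of_mem_nhds (by simpa using hU)⟩
    · have hlim : ContinuousAt (fun e : ℝ => k • e⁻¹) d := by fun_prop (disch := assumption)
      filter_upwards [hlim.preimage_mem_nhds hU] with e he
      exact ⟨k • e⁻¹, zsmul_mem_zmultiples _ k, he⟩

theorem eq_of_zmultiples_eq_zmultiples {a b : ℝ} (ha : 0 ≤ a) (hb : 0 ≤ b)
    (h : zmultiples a = zmultiples b) : a = b := by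
  rcases ha.eq_or_lt with rfl | ha
  · rw [zmultiples_zero_eq_bot, eq_comm, zmultiples_eq_bot] at h
    exact h.symm
  · have hfin : ¬ IsOfFinAddOrder a := not_isOfFinAddOrder_of_isAddTorsionFree ha.ne'
    rcases (zmultiples_eq_zmultiples_iff hfin).1 h with hab | hab <;> linarith

end Periods

theorem smul_closure_pair {R M : Type*} [Monoid R] [AddGroup M] [DistribMulAction R M] (t : R)
    (e f : M) : t • AddSubgroup.closure {e, f} = AddSubgroup.closure {t • e, t • f} := by
  rw [← image_pair (t • ·)]
  exact AddMonoidHom.map_closure (DistribSMul.toAddMonoidHom M t) {e, f}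

theorem exists_min_norm_of_discreteTopology {E : Type*} [NormedAddCommGroup E] [ProperSpace E]
    {Γ : AddSubgroup E} [DiscreteTopology Γ] (hΓ : Γ ≠ ⊥) :
    ∃ x ∈ Γ, x ≠ 0 ∧ ∀ y ∈ Γ, y ≠ 0 → ‖x‖ ≤ ‖y‖ := by
  obtain ⟨z, hz, hz0⟩ := Γ.bot_or_exists_ne_zero.resolve_left hΓ
  have hfin : (closedBall 0 ‖z‖ ∩ (Γ : Set E)).Finite :=
    finite_isBounded_inter_isClosed ⟨inferInstanceAs (DiscreteTopology Γ)⟩ isBounded_closedBall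
      Γ.isClosed_of_discrete
  obtain ⟨x, ⟨⟨-, hx⟩, hx0⟩, hmin⟩ := exists_min_image _ norm (hfin.sdiff (t := {0}))
    ⟨z, ⟨by simp, hz⟩, hz0⟩
  refine ⟨x, hx, hx0, fun y hy hy0 => ?_⟩
  rcases le_total ‖y‖ ‖z‖ with hyz | hzy
  · exact hmin y ⟨⟨by simpa using hyz, hy⟩, hy0⟩
  · exact (hmin z ⟨⟨by simp, hz⟩, hz0⟩).trans hzy

theorem span_singleton_ne_top {K V : Type*} [DivisionRing K] [AddCommGroup V] [Module K V]
    (hV : 1 < Module.finrank K V) (v : V) : Submodule.span K {v} ≠ ⊤ := by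
  intro h
  have hle := finrank_span_le_card (R := K) ({v} : Set V)
  rw [h, finrank_top, toFinset_singleton, Finset.card_singleton] at hle
  exact hle.not_gt hV

section InnerProductSpace

open scoped RealInnerProductSpace

theorem exists_zsmul_abs_inner_sub_le {E : Type*} [NormedAddCommGroup E] [InnerProductSpace ℝ E]
    {v : E} (hv : ‖v‖ = 1) (x : E) : ∃ k : ℤ, |⟪v, x - k • v⟫| ≤ 1 / 2 := by
  refine ⟨round ⟪v, x⟫, ?_⟩
  rw [← Int.cast_smul_eq_zsmul ℝ, inner_sub_right, real_inner_smul_right,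
    real_inner_self_eq_norm_sq, hv, one_pow, mul_one]
  exact abs_sub_round _

end InnerProductSpace

section ReducedBases

variable {E : Type*} [NormedAddCommGroup E]

/-- The parameters `(v, a, r)` of the groups generated by a shortest vector `v`, of norm `1`, and a
second vector `a v + r⁻² J v` of norm at least `1` reduced against it. The compactifying value
`r = 0` stands for the group `ℤ v`, whose second generator has gone to infinity. -/
def reducedBases : Set (sphere (0 : E) 1 × ℝ × ℝ) :=
  {p | |p.2.1| ≤ 1 / 2 ∧ 0 ≤ p.2.2 ∧ p.2.2 ^ 4 * (1 - p.2.1 ^ 2) ≤ 1}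

theorem isCompact_reducedBases [ProperSpace E] :
    IsCompact (reducedBases : Set (sphere (0 : E) 1 × ℝ × ℝ)) := by
  have hclosed : IsClosed (reducedBases : Set (sphere (0 : E) 1 × ℝ × ℝ)) := by
    have ha := isClosed_le (f := fun p : sphere (0 : E) 1 × ℝ × ℝ => |p.2.1|)
      (g := fun _ => 1 / 2) (by fun_prop) (by fun_prop)
    have hr := isClosed_le (f := fun _ => 0) (g := fun p : sphere (0 : E) 1 × ℝ × ℝ => p.2.2)
      (by fun_prop) (by fun_prop)
    have har := isClosed_le
      (f := fun p : sphere (0 : E) 1 × ℝ × ℝ => p.2.2 ^ 4 * (1 - p.2.1 ^ 2)) (g := fun _ => 1)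
      (by fun_prop) (by fun_prop)
    exact ha.inter (hr.inter har)
  refine (isCompact_univ.prod ((isCompact_Icc (a := -(1 / 2 : ℝ)) (b := 1 / 2)).prod
    (isCompact_Icc (a := (0 : ℝ)) (b := 2)))).of_isClosed_subset hclosed ?_
  rintro ⟨v, a, r⟩ ⟨ha, hr, har⟩
  refine ⟨mem_univ v, abs_le.1 ha, hr, ?_⟩
  dsimp only at ha hr har ⊢
  by_contra! hr2
  have ha2 : a ^ 2 ≤ 1 / 4 := by nlinarith [abs_le.1 ha]
  have hr4 : (2 : ℝ) ^ 4 < r ^ 4 := by gcongr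
  nlinarith

end ReducedBases

section OrientedPlane

open AddSubgroup hiding closure
open Module
open scoped RealInnerProductSpace

variable {E : Type*} [NormedAddCommGroup E] [InnerProductSpace ℝ E] [Fact (finrank ℝ E = 2)]
  (o : Orientation ℝ E (Fin 2)) {v : E} {b s d : ℝ}

local notation "ω" => o.areaForm
local notation "J" => o.rightAngleRotation

theorem inner_smul_add_areaForm_smul (hv : ‖v‖ = 1) (x : E) : ⟪v, x⟫ • v + ω v x • J v = x := by
  refine ext_inner_right ℝ fun y => ?_
  rw [inner_add_left, real_inner_smul_left, real_inner_smul_left,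
    o.inner_rightAngleRotation_left, o.inner_mul_inner_add_areaForm_mul_areaForm, hv, one_pow,
    one_mul]

theorem norm_sq_eq_inner_sq_add_areaForm_sq (hv : ‖v‖ = 1) (x : E) :
    ‖x‖ ^ 2 = ⟪v, x⟫ ^ 2 + ω v x ^ 2 := by
  rw [o.inner_sq_add_areaForm_sq, hv, one_pow, one_mul]

/-- The coordinates `(c, h)` of a vector `c v + h (b v + J v)`, where `v` is a unit vector. -/
def shearedCoord (v : E) (b : ℝ) : E →ₗ[ℝ] ℝ × ℝ :=
  (innerₛₗ ℝ v - b • ω v).prod (ω v)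

/-- The vector `c v + h (b v + J v)` with sheared coordinates `(c, h)`. -/
def shearedVector (v : E) (b : ℝ) (q : ℝ × ℝ) : E :=
  q.1 • v + q.2 • (b • v + J v)

theorem shearedCoord_apply (v : E) (b : ℝ) (x : E) :
    shearedCoord o v b x = (⟪v, x⟫ - b * ω v x, ω v x) :=
  rfl

theorem shearedVector_shearedCoord (hv : ‖v‖ = 1) (b : ℝ) (x : E) :
    shearedVector o v b (shearedCoord o v b x) = x := by
  calc shearedVector o v b (shearedCoord o v b x) = ⟪v, x⟫ • v + ω v x • J v := by
        rw [shearedCoord_apply, shearedVector]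
        module
    _ = x := inner_smul_add_areaForm_smul o hv x

theorem inner_shearedVector (hv : ‖v‖ = 1) (b : ℝ) (q : ℝ × ℝ) :
    ⟪v, shearedVector o v b q⟫ = q.1 + b * q.2 := by
  simp [shearedVector, inner_add_right, real_inner_smul_right, hv, mul_comm]

theorem areaForm_shearedVector (hv : ‖v‖ = 1) (b : ℝ) (q : ℝ × ℝ) :
    ω v (shearedVector o v b q) = q.2 := by
  simp [shearedVector, hv]

theorem shearedCoord_shearedVector (hv : ‖v‖ = 1) (b : ℝ) (q : ℝ × ℝ) :
    shearedCoord o v b (shearedVector o v b q) = q := by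
  rw [shearedCoord_apply, inner_shearedVector o hv, areaForm_shearedVector o hv,
    add_sub_cancel_right]

/-- The closed group of the vectors `c v + h (b v + J v)` with `c ∈ ℤ s` and `h ∈ ℤ d⁻¹`. The two
degenerate spacings are limits: `s = 0` allows every real `c` (see `periods`), and `d = 0` (where
`d⁻¹ = 0`) allows only `h = 0`, the rows of the grid having moved off to infinity. -/
def shearedGrid (v : E) (b s d : ℝ) : AddSubgroup E :=
  ((periods s).prod (zmultiples d⁻¹)).comap (shearedCoord o v b).toAddMonoidHom

theorem mem_shearedGrid_iff_shearedCoord {x : E} : x ∈ shearedGrid o v b s d ↔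
    shearedCoord o v b x ∈ (periods s : Set ℝ) ×ˢ (zmultiples d⁻¹ : Set ℝ) :=
  Iff.rfl

theorem mem_shearedGrid_iff (hv : ‖v‖ = 1) {x : E} : x ∈ shearedGrid o v b s d ↔
    ∃ c ∈ periods s, ∃ h ∈ zmultiples d⁻¹, shearedVector o v b (c, h) = x := by
  rw [mem_shearedGrid_iff_shearedCoord]
  constructor
  · exact fun hx => ⟨_, hx.1, _, hx.2, shearedVector_shearedCoord o hv b x⟩
  · rintro ⟨c, hc, h, hh, rfl⟩
    rw [shearedCoord_shearedVector o hv]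
    exact ⟨hc, hh⟩

theorem fellContinuous_shearedGrid : FellContinuous fun p : sphere (0 : E) 1 × ℝ × ℝ × ℝ =>
    (shearedGrid o (p.1 : E) p.2.1 p.2.2.1 p.2.2.2 : Set E) := by
  have hcoord : Continuous fun q : (sphere (0 : E) 1 × ℝ × ℝ × ℝ) × E =>
      shearedCoord o (q.1.1 : E) q.1.2.1 q.2 := by
    simp only [shearedCoord_apply, ← o.inner_rightAngleRotation_left]
    fun_prop
  have hvector : Continuous fun q : (sphere (0 : E) 1 × ℝ × ℝ × ℝ) × ℝ × ℝ =>
      shearedVector o (q.1.1 : E) q.1.2.1 q.2 := by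
    unfold shearedVector
    fun_prop
  have hspacing : FellContinuous fun p : sphere (0 : E) 1 × ℝ × ℝ × ℝ =>
      (periods p.2.2.1 : Set ℝ) ×ˢ (zmultiples p.2.2.2⁻¹ : Set ℝ) :=
    (fellContinuous_periods.comp (by fun_prop)).prod (fellContinuous_zmultiples_inv.comp
      (by fun_prop))
  exact hspacing.preimage hcoord hvector
    (fun p => shearedVector_shearedCoord o (norm_eq_of_mem_sphere p.1) p.2.1)
    (fun p => shearedCoord_shearedVector o (norm_eq_of_mem_sphere p.1) p.2.1)

theorem shearedGrid_eq_closure (hv : ‖v‖ = 1) (hs : s ≠ 0) (b d : ℝ) :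
    shearedGrid o v b s d = AddSubgroup.closure {s • v, d⁻¹ • (b • v + J v)} := by
  ext x
  rw [mem_shearedGrid_iff o hv, periods_of_ne_zero hs, mem_closure_pair]
  simp only [mem_zmultiples_iff, exists_exists_eq_and, shearedVector, smul_assoc]

/-- The set of oriented areas spanned by pairs of elements of a group. For a lattice it is `ℤ κ`,
with `κ` the covolume. -/
def areaSpectrum (Γ : AddSubgroup E) : Set ℝ :=
  image2 (fun x y => ω x y) Γ Γ

theorem areaSpectrum_closure_pair (e f : E) :
    areaSpectrum o (AddSubgroup.closure {e, f}) = zmultiples (ω e f) := by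
  have harea : ∀ i j k l : ℤ,
      ω (i • e + j • f) (k • e + l • f) = (i * l - j * k : ℤ) • ω e f := fun i j k l => by
    simp only [map_add, LinearMap.add_apply, map_zsmul, LinearMap.smul_apply,
      o.areaForm_apply_self, o.areaForm_swap f e, zsmul_eq_mul]
    push_cast
    ring
  ext z
  simp only [areaSpectrum, mem_image2, SetLike.mem_coe, mem_closure_pair, mem_zmultiples_iff]
  constructor
  · rintro ⟨_, ⟨i, j, rfl⟩, _, ⟨k, l, rfl⟩, rfl⟩
    exact ⟨_, (harea i j k l).symm⟩
  · rintro ⟨m, rfl⟩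
    exact ⟨_, ⟨m, 0, rfl⟩, _, ⟨0, 1, rfl⟩, by rw [harea]; simp⟩


/-- The group with basis `(v, a v + r⁻² J v)` at the parameters `(v, a, r)`; its covolume is
`r⁻²`. -/
def reducedGrid (p : sphere (0 : E) 1 × ℝ × ℝ) : AddSubgroup E :=
  shearedGrid o (p.1 : E) (p.2.1 * p.2.2 ^ 2) 1 (p.2.2 ^ 2)

/-- The rescaling `r • reducedGrid o (v, a, r)` of unit covolume; for `r = 0` it is the line through
`v`, the limit of these rescalings. -/
def rescaledGrid (p : sphere (0 : E) 1 × ℝ × ℝ) : AddSubgroup E :=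
  shearedGrid o (p.1 : E) (p.2.1 * p.2.2 ^ 2) p.2.2 p.2.2

variable {o} {p q : sphere (0 : E) 1 × ℝ × ℝ}

theorem fellContinuous_reducedGrid :
    FellContinuous fun p : sphere (0 : E) 1 × ℝ × ℝ => (reducedGrid o p : Set E) := by
  have hparam : Continuous fun p : sphere (0 : E) 1 × ℝ × ℝ =>
      (p.1, p.2.1 * p.2.2 ^ 2, (1 : ℝ), p.2.2 ^ 2) := by
    fun_prop
  exact ((fellContinuous_shearedGrid o).comp hparam :)

theorem fellContinuous_rescaledGrid :
    FellContinuous fun p : sphere (0 : E) 1 × ℝ × ℝ => (rescaledGrid o p : Set E) := by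
  have hparam : Continuous fun p : sphere (0 : E) 1 × ℝ × ℝ =>
      (p.1, p.2.1 * p.2.2 ^ 2, p.2.2, p.2.2) := by
    fun_prop
  exact ((fellContinuous_shearedGrid o).comp hparam :)

theorem reducedGrid_eq_closure (p : sphere (0 : E) 1 × ℝ × ℝ) :
    reducedGrid o p = AddSubgroup.closure
      {(p.1 : E), (p.2.2 ^ 2)⁻¹ • ((p.2.1 * p.2.2 ^ 2) • (p.1 : E) + J (p.1 : E))} := by
  rw [reducedGrid, shearedGrid_eq_closure o (norm_eq_of_mem_sphere p.1) one_ne_zero, one_smul]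

theorem rescaledGrid_eq_closure (hr : p.2.2 ≠ 0) :
    rescaledGrid o p = AddSubgroup.closure
      {p.2.2 • (p.1 : E), p.2.2⁻¹ • ((p.2.1 * p.2.2 ^ 2) • (p.1 : E) + J (p.1 : E))} :=
  shearedGrid_eq_closure o (norm_eq_of_mem_sphere p.1) hr _ _

theorem smul_reducedGrid (hr : p.2.2 ≠ 0) : p.2.2 • reducedGrid o p = rescaledGrid o p := by
  have hscale : p.2.2 * (p.2.2 ^ 2)⁻¹ = p.2.2⁻¹ := by field_simp
  rw [reducedGrid_eq_closure, rescaledGrid_eq_closure hr, smul_closure_pair, smul_smul, hscale]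

theorem coe_rescaledGrid_of_eq_zero (hr : p.2.2 = 0) :
    (rescaledGrid o p : Set E) = Submodule.span ℝ {(p.1 : E)} := by
  ext x
  rw [SetLike.mem_coe, rescaledGrid, mem_shearedGrid_iff o (norm_eq_of_mem_sphere p.1), hr,
    SetLike.mem_coe, Submodule.mem_span_singleton]
  simp [shearedVector]

theorem reducedGrid_of_eq_zero (hr : p.2.2 = 0) : reducedGrid o p = zmultiples (p.1 : E) := by
  rw [reducedGrid_eq_closure, hr, zmultiples_eq_closure]
  simp [pair_comm _ (0 : E)]

theorem span_reducedGrid_of_eq_zero (hr : p.2.2 = 0) :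
    Submodule.span ℝ (reducedGrid o p : Set E) = Submodule.span ℝ {(p.1 : E)} := by
  rw [reducedGrid_of_eq_zero hr]
  refine le_antisymm (Submodule.span_le.2 ?_)
    (Submodule.span_mono (singleton_subset_iff.2 (mem_zmultiples _)))
  rintro _ ⟨m, rfl⟩
  exact zsmul_mem (Submodule.mem_span_singleton_self _) m

theorem areaSpectrum_reducedGrid (p : sphere (0 : E) 1 × ℝ × ℝ) :
    areaSpectrum o (reducedGrid o p) = zmultiples (p.2.2 ^ 2)⁻¹ := by
  rw [reducedGrid_eq_closure, areaSpectrum_closure_pair]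
  simp

theorem one_le_sq_add_mul_mul_add_sq {a : ℝ} (ha : |a| ≤ 1 / 2) {m n : ℤ} (hmn : m ≠ 0 ∨ n ≠ 0) :
    1 ≤ (m : ℝ) ^ 2 + 2 * a * (m * n) + n ^ 2 := by
  have hint : 1 ≤ m ^ 2 - |m * n| + n ^ 2 := by
    have : 0 < |m| ∨ 0 < |n| := hmn.imp abs_pos.2 abs_pos.2
    rw [abs_mul, ← sq_abs m, ← sq_abs n]
    rcases this with h | h <;> nlinarith [sq_nonneg (2 * |m| - |n|), sq_nonneg (2 * |n| - |m|)]
  have hcross : |2 * a * (m * n)| ≤ |(m * n : ℝ)| := by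
    rw [abs_mul, abs_mul, abs_two]
    exact mul_le_of_le_one_left (abs_nonneg _) (by linarith)
  have hreal : (1 : ℝ) ≤ m ^ 2 - |(m * n : ℝ)| + n ^ 2 := mod_cast hint
  linarith [neg_le_of_abs_le hcross]

theorem one_le_norm_of_mem_reducedGrid (hp : p ∈ reducedBases) {x : E} (hx : x ∈ reducedGrid o p)
    (hx0 : x ≠ 0) : 1 ≤ ‖x‖ := by
  obtain ⟨v, a, r⟩ := p
  obtain ⟨ha, -, har⟩ := hp
  dsimp only at ha har
  have hv := norm_eq_of_mem_sphere v
  obtain ⟨c, hc, h, hh, rfl⟩ := (mem_shearedGrid_iff o hv).1 hx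
  rw [periods_of_ne_zero one_ne_zero] at hc
  obtain ⟨m, rfl⟩ := mem_zmultiples_iff.1 hc
  obtain ⟨n, rfl⟩ := mem_zmultiples_iff.1 hh
  refine (one_le_sq_iff₀ (norm_nonneg _)).1 ?_
  rw [norm_sq_eq_inner_sq_add_areaForm_sq o hv, inner_shearedVector o hv,
    areaForm_shearedVector o hv]
  simp only [zsmul_eq_mul, mul_one]
  rcases eq_or_ne r 0 with rfl | hr
  · have hm : m ≠ 0 := by rintro rfl; simp [shearedVector] at hx0
    have := one_le_sq_add_mul_mul_add_sq (a := 0) (by simp) (.inl hm : m ≠ 0 ∨ (0 : ℤ) ≠ 0)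
    simpa using this
  · have hmn : m ≠ 0 ∨ n ≠ 0 := by
      by_contra! hmn
      simp [shearedVector, hmn] at hx0
    have hr4 : 1 - a ^ 2 ≤ ((r ^ 2)⁻¹) ^ 2 := by
      rw [inv_pow, ← one_div, le_div_iff₀ (by positivity)]
      linarith
    calc (1 : ℝ) ≤ m ^ 2 + 2 * a * (m * n) + n ^ 2 := one_le_sq_add_mul_mul_add_sq ha hmn
      _ = (m + a * n) ^ 2 + n ^ 2 * (1 - a ^ 2) := by ring
      _ ≤ (m + a * n) ^ 2 + n ^ 2 * ((r ^ 2)⁻¹) ^ 2 := by gcongr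
      _ = (m + a * r ^ 2 * (n * (r ^ 2)⁻¹)) ^ 2 + (n * (r ^ 2)⁻¹) ^ 2 := by field_simp

theorem isGLB_norm_rescaledGrid (hp : p ∈ reducedBases) :
    IsGLB (norm '' ((rescaledGrid o p : Set E) \ {0})) p.2.2 := by
  have hv := norm_eq_of_mem_sphere p.1
  have hv0 : (p.1 : E) ≠ 0 := ne_zero_of_mem_unit_sphere p.1
  rcases eq_or_ne p.2.2 0 with hr | hr
  · rw [hr]
    refine ⟨forall_mem_image.2 fun x _ => norm_nonneg x, fun b hb => ?_⟩
    refine le_of_forall_pos_le_add fun t ht => ?_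
    have hmem : t • (p.1 : E) ∈ rescaledGrid o p := by
      rw [← SetLike.mem_coe, coe_rescaledGrid_of_eq_zero hr]
      exact Submodule.smul_mem _ t (Submodule.mem_span_singleton_self _)
    have := hb (mem_image_of_mem norm ⟨hmem, smul_ne_zero ht.ne' hv0⟩)
    simpa [norm_smul, hv, abs_of_pos ht] using this
  · have hr0 : 0 < p.2.2 := hp.2.1.lt_of_ne' hr
    refine IsLeast.isGLB ⟨⟨p.2.2 • (p.1 : E), ⟨?_, smul_ne_zero hr hv0⟩, ?_⟩, ?_⟩
    · rw [SetLike.mem_coe, rescaledGrid_eq_closure hr]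
      exact subset_closure (mem_insert _ _)
    · simp [norm_smul, hv, hr0.le]
    · rintro _ ⟨x, ⟨hx, hx0⟩, rfl⟩
      rw [← smul_reducedGrid hr] at hx
      obtain ⟨y, hy, rfl⟩ := hx
      have hy0 : y ≠ 0 := by rintro rfl; simp at hx0
      have hle := mul_le_mul_of_nonneg_left (one_le_norm_of_mem_reducedGrid hp hy hy0) hr0.le
      simpa [norm_smul, abs_of_pos hr0] using hle

theorem mem_reducedGrid_iff_of_eq_zero (hr : p.2.2 = 0) {x : E} :
    x ∈ reducedGrid o p ↔ x ∈ rescaledGrid o p ∧ ‖x‖ ∈ zmultiples (1 : ℝ) := by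
  rw [← SetLike.mem_coe (p := rescaledGrid o p), coe_rescaledGrid_of_eq_zero hr, SetLike.mem_coe,
    Submodule.mem_span_singleton, reducedGrid_of_eq_zero hr, mem_zmultiples_iff, mem_zmultiples_iff]
  have hnorm : ∀ t : ℝ, ‖t • (p.1 : E)‖ = |t| := fun t => by
    rw [norm_smul, norm_eq_of_mem_sphere, mul_one, Real.norm_eq_abs]
  constructor
  · rintro ⟨m, rfl⟩
    refine ⟨⟨m, Int.cast_smul_eq_zsmul ℝ m _⟩, |m|, ?_⟩
    rw [zsmul_one, Int.cast_abs, ← hnorm, Int.cast_smul_eq_zsmul]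
  · rintro ⟨⟨t, rfl⟩, m, hm⟩
    rw [hnorm, zsmul_eq_mul, mul_one] at hm
    rcases abs_choice t with ht | ht
    · exact ⟨m, by rw [← Int.cast_smul_eq_zsmul ℝ, hm, ht]⟩
    · exact ⟨-m, by rw [← Int.cast_smul_eq_zsmul ℝ, Int.cast_neg, hm, ht, neg_neg]⟩

theorem reducedGrid_eq_iff (hp : p ∈ reducedBases) (hq : q ∈ reducedBases) :
    reducedGrid o p = reducedGrid o q ↔ rescaledGrid o p = rescaledGrid o q := by
  constructor
  · intro h
    have hspec : zmultiples (p.2.2 ^ 2)⁻¹ = zmultiples (q.2.2 ^ 2)⁻¹ := SetLike.coe_injective <| by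
      rw [← areaSpectrum_reducedGrid (o := o) p, h, areaSpectrum_reducedGrid]
    have hr : p.2.2 = q.2.2 := by
      have := eq_of_zmultiples_eq_zmultiples (by positivity) (by positivity) hspec
      exact (pow_left_inj₀ hp.2.1 hq.2.1 two_ne_zero).1 (inv_injective this)
    rcases eq_or_ne p.2.2 0 with h0 | h0
    · refine SetLike.coe_injective ?_
      rw [coe_rescaledGrid_of_eq_zero h0, coe_rescaledGrid_of_eq_zero (hr ▸ h0),
        ← span_reducedGrid_of_eq_zero (o := o) h0, h, span_reducedGrid_of_eq_zero (hr ▸ h0)]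
    · rw [← smul_reducedGrid h0, ← smul_reducedGrid (hr ▸ h0), h, hr]
  · intro h
    have hr : p.2.2 = q.2.2 :=
      (isGLB_norm_rescaledGrid (o := o) hp).unique (h ▸ isGLB_norm_rescaledGrid hq)
    rcases eq_or_ne p.2.2 0 with h0 | h0
    · ext x
      rw [mem_reducedGrid_iff_of_eq_zero h0, mem_reducedGrid_iff_of_eq_zero (hr ▸ h0), h]
    · rw [← inv_smul_smul₀ h0 (reducedGrid o p), smul_reducedGrid h0, h,
        ← smul_reducedGrid (hr ▸ h0), hr, inv_smul_smul₀ (hr ▸ h0)]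

theorem areaForm_sub_zsmul_self (v x : E) (k : ℤ) : ω v (x - k • v) = ω v x := by
  rw [map_sub, map_zsmul, o.areaForm_apply_self, smul_zero, sub_zero]

variable {Γ : AddSubgroup E}

theorem mem_zmultiples_of_areaForm_sq_lt (hv : ‖v‖ = 1) (hvΓ : v ∈ Γ)
    (hmin : ∀ y ∈ Γ, y ≠ 0 → 1 ≤ ‖y‖) {x : E} (hx : x ∈ Γ) (hωx : ω v x ^ 2 < 3 / 4) :
    x ∈ zmultiples v := by
  obtain ⟨k, hk⟩ := exists_zsmul_abs_inner_sub_le hv x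
  suffices x - k • v = 0 from ⟨k, (sub_eq_zero.1 this).symm⟩
  by_contra hne
  have hinner : ⟪v, x - k • v⟫ ^ 2 ≤ (1 / 2) ^ 2 :=
    sq_le_sq' (abs_le.1 hk).1 (abs_le.1 hk).2
  have hsq := norm_sq_eq_inner_sq_add_areaForm_sq o hv (x - k • v)
  rw [areaForm_sub_zsmul_self] at hsq
  have hlt : ‖x - k • v‖ < 1 := (sq_lt_one_iff₀ (norm_nonneg _)).1 (by linarith)
  exact hlt.not_ge (hmin _ (sub_mem hx (zsmul_mem hvΓ k)) hne)

theorem exists_areaForm_generator (hv : ‖v‖ = 1) (hvΓ : v ∈ Γ)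
    (hmin : ∀ y ∈ Γ, y ≠ 0 → 1 ≤ ‖y‖) :
    ∃ w ∈ Γ, 0 ≤ ω v w ∧ ∀ x ∈ Γ, ω v x ∈ zmultiples (ω v w) := by
  have hgap : Disjoint (Γ.map (ω v).toAddMonoidHom : Set ℝ) (Ioo 0 (1 / 2)) := by
    refine disjoint_left.2 ?_
    rintro _ ⟨x, hx, rfl⟩ ⟨hpos, hlt⟩
    change 0 < ω v x at hpos
    change ω v x < 1 / 2 at hlt
    obtain ⟨k, rfl⟩ := mem_zmultiples_iff.1 (mem_zmultiples_of_areaForm_sq_lt (o := o) hv hvΓ hmin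
      hx (by nlinarith))
    simp at hpos
  obtain ⟨h, hh⟩ := cyclic_of_isolated_zero one_half_pos hgap
  rw [← zmultiples_eq_closure] at hh
  obtain ⟨w, hw, rfl⟩ := mem_map.1 (hh ▸ mem_zmultiples h)
  have hgen : ∀ x ∈ Γ, ω v x ∈ zmultiples (ω v w) := fun x hx => hh ▸ mem_map_of_mem _ hx
  rcases le_total 0 (ω v w) with hpos | hneg
  · exact ⟨w, hw, hpos, hgen⟩
  · refine ⟨-w, neg_mem hw, by simpa using hneg, fun x hx => ?_⟩
    rw [map_neg, zmultiples_neg]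
    exact hgen x hx

theorem exists_reduced_closure_pair_eq (hv : ‖v‖ = 1) (hvΓ : v ∈ Γ)
    (hmin : ∀ y ∈ Γ, y ≠ 0 → 1 ≤ ‖y‖) :
    ∃ w ∈ Γ, 0 ≤ ω v w ∧ |⟪v, w⟫| ≤ 1 / 2 ∧ AddSubgroup.closure {v, w} = Γ := by
  obtain ⟨w, hw, hpos, hgen⟩ := exists_areaForm_generator (o := o) hv hvΓ hmin
  obtain ⟨k, hk⟩ := exists_zsmul_abs_inner_sub_le hv w
  have hw' : w - k • v ∈ Γ := sub_mem hw (zsmul_mem hvΓ k)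
  refine ⟨w - k • v, hw', by rwa [areaForm_sub_zsmul_self], hk, le_antisymm ?_ fun x hx => ?_⟩
  · exact (closure_le Γ).2 (pair_subset hvΓ hw')
  · obtain ⟨m, hm⟩ := mem_zmultiples_iff.1 (hgen x hx)
    have hωx : ω v (x - m • (w - k • v)) = 0 := by
      rw [map_sub, map_zsmul, areaForm_sub_zsmul_self, hm, sub_self]
    obtain ⟨l, hl⟩ := mem_zmultiples_iff.1 (mem_zmultiples_of_areaForm_sq_lt hv hvΓ hmin
      (sub_mem hx (zsmul_mem hw' m)) (by rw [hωx]; norm_num))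
    exact mem_closure_pair.2 ⟨l, m, by rw [hl, sub_add_cancel]⟩

variable (o) in
theorem exists_reducedGrid_eq (hv : ‖v‖ = 1) (hvΓ : v ∈ Γ)
    (hmin : ∀ y ∈ Γ, y ≠ 0 → 1 ≤ ‖y‖) : ∃ p ∈ reducedBases, reducedGrid o p = Γ := by
  obtain ⟨w, hw, hpos, hinner, hΓ⟩ := exists_reduced_closure_pair_eq (o := o) hv hvΓ hmin
  have hr : (√(ω v w))⁻¹ ^ 2 = (ω v w)⁻¹ := by rw [inv_pow, Real.sq_sqrt hpos]
  have hsq := norm_sq_eq_inner_sq_add_areaForm_sq o hv w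
  have hw0 : w ≠ 0 → 1 ≤ ‖w‖ ^ 2 := fun hne => one_le_pow₀ (hmin w hw hne)
  have hω0 : ω v w = 0 → w = 0 := fun h0 => by
    have hinner_sq := sq_le_sq' (abs_le.1 hinner).1 (abs_le.1 hinner).2
    contrapose! hw0
    exact ⟨hw0, by nlinarith⟩
  refine ⟨(⟨v, mem_sphere_zero_iff_norm.2 hv⟩, ⟪v, w⟫, (√(ω v w))⁻¹),
    ⟨hinner, by positivity, ?_⟩, ?_⟩
  · calc (√(ω v w))⁻¹ ^ 4 * (1 - ⟪v, w⟫ ^ 2) = (1 - ⟪v, w⟫ ^ 2) / ω v w ^ 2 := by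
          rw [pow_mul (√(ω v w))⁻¹ 2 2, hr, inv_pow, inv_mul_eq_div]
      _ ≤ 1 := by
          rcases eq_or_ne w 0 with rfl | hne
          · simp
          · exact div_le_one_of_le₀ (by linarith [hw0 hne]) (sq_nonneg _)
  · have hsecond : ω v w • ((⟪v, w⟫ * (ω v w)⁻¹) • v + J v) = w := by
      rcases eq_or_ne (ω v w) 0 with h0 | h0
      · rw [h0, zero_smul, hω0 h0]
      · rw [smul_add, smul_smul, mul_left_comm, mul_inv_cancel₀ h0, mul_one,
          inner_smul_add_areaForm_smul o hv]
    rw [reducedGrid_eq_closure]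
    dsimp only
    rw [hr, inv_inv, hsecond, hΓ]

variable (o) in
theorem exists_smul_reducedGrid_eq [DiscreteTopology Γ] (hΓ : Γ ≠ ⊥) :
    ∃ t : ℝ, 0 < t ∧ ∃ p ∈ reducedBases, t • reducedGrid o p = Γ := by
  have : FiniteDimensional ℝ E := .of_fact_finrank_eq_two
  have : ProperSpace E := FiniteDimensional.proper_real E
  obtain ⟨x, hx, hx0, hmin⟩ := exists_min_norm_of_discreteTopology hΓ
  have ht : 0 < ‖x‖ := norm_pos_iff.2 hx0
  have hmin' : ∀ y ∈ ‖x‖⁻¹ • Γ, y ≠ 0 → 1 ≤ ‖y‖ := by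
    rintro _ ⟨y, hy, rfl⟩ hy0
    have hle := hmin y hy (by rintro rfl; simp at hy0)
    simpa [norm_smul, inv_mul_eq_div, one_le_div₀ ht] using hle
  obtain ⟨p, hp, hpΓ⟩ := exists_reducedGrid_eq o (norm_smul_inv_norm hx0)
    (smul_mem_pointwise_smul x ‖x‖⁻¹ Γ hx) hmin'
  exact ⟨‖x‖, ht, p, hp, by rw [hpΓ, smul_inv_smul₀ ht.ne']⟩

theorem exists_rescaledGrid_eq [DiscreteTopology Γ]
    (hΓ : areaSpectrum o Γ = zmultiples (1 : ℝ)) : ∃ p ∈ reducedBases, rescaledGrid o p = Γ := by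
  have hbot : Γ ≠ ⊥ := by
    rintro rfl
    have h1 : (1 : ℝ) ∈ areaSpectrum o (⊥ : AddSubgroup E) := hΓ ▸ mem_zmultiples 1
    simp [areaSpectrum] at h1
  obtain ⟨t, ht, p, hp, rfl⟩ := exists_smul_reducedGrid_eq o hbot
  have hspec : zmultiples (t ^ 2 * (p.2.2 ^ 2)⁻¹) = zmultiples (1 : ℝ) := by
    refine SetLike.coe_injective ?_
    rw [← hΓ, reducedGrid_eq_closure, smul_closure_pair, areaSpectrum_closure_pair]
    simp [sq, mul_assoc]
  have hone := eq_of_zmultiples_eq_zmultiples (by positivity) zero_le_one hspec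
  have hr : p.2.2 ≠ 0 := fun hr => by simp [hr] at hone
  have htr : t = p.2.2 := by
    rw [← div_eq_mul_inv, div_eq_one_iff_eq (pow_ne_zero 2 hr)] at hone
    exact (pow_left_inj₀ ht.le hp.2.1 two_ne_zero).1 hone
  exact ⟨p, hp, by rw [htr, smul_reducedGrid hr]⟩

theorem linearIndependent_pair_of_areaForm_ne_zero {e f : E} (h : ω e f ≠ 0) :
    LinearIndependent ℝ ![e, f] := by
  refine LinearIndependent.pair_iff.2 fun s t hst => ?_
  have he : t * ω e f = 0 := by simpa using congrArg (ω e) hst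
  have hf : s * ω f e = 0 := by simpa using congrArg (ω f) hst
  rw [o.areaForm_swap] at hf
  exact ⟨(mul_eq_zero.1 hf).resolve_right (neg_ne_zero.2 h), (mul_eq_zero.1 he).resolve_right h⟩

end OrientedPlane

section Plane

open AddSubgroup hiding closure
open Module
open scoped EuclideanSpace

/-- The standard orientation of `ℝ²`. -/
def planeOrientation : Orientation ℝ (Euc 2) (Fin 2) :=
  (EuclideanSpace.basisFun (Fin 2) ℝ).toBasis.orientation

theorem areaForm_planeOrientation (e f : Euc 2) :
    planeOrientation.areaForm e f = e 0 * f 1 - e 1 * f 0 := by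
  rw [Orientation.areaForm_to_volumeForm,
    planeOrientation.volumeForm_robust (EuclideanSpace.basisFun (Fin 2) ℝ) rfl,
    Basis.det_apply, Matrix.det_fin_two]
  simp [Basis.toMatrix_apply, mul_comm]

theorem isLattice_closure_pair {e f : Euc 2} (h : planeOrientation.areaForm e f ≠ 0) :
    IsLattice (AddSubgroup.closure {e, f}) := by
  let b := basisOfLinearIndependentOfCardEqFinrank
    (linearIndependent_pair_of_areaForm_ne_zero h) (by simp)
  have hrange : range b = {e, f} := by simp [b, pair_comm]
  have hspan : (Submodule.span ℤ (range b)).toAddSubgroup = AddSubgroup.closure {e, f} := by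
    rw [Submodule.span_int_eq_addSubgroupClosure, hrange]
  rw [← hspan]
  exact ⟨inferInstance, ZSpan.span_top b⟩

/-- The group `reducedGrid` as a point of the Chabauty space. -/
def reducedPoint (p : sphere (0 : Euc 2) 1 × ℝ × ℝ) : ChabautyPoint 2 :=
  ⟨reducedGrid planeOrientation p, fellContinuous_reducedGrid.isClosed p⟩

/-- The group `rescaledGrid` as a point of the Chabauty space. -/
def rescaledPoint (p : sphere (0 : Euc 2) 1 × ℝ × ℝ) : ChabautyPoint 2 :=
  ⟨rescaledGrid planeOrientation p, fellContinuous_rescaledGrid.isClosed p⟩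

theorem continuous_reducedPoint : Continuous reducedPoint :=
  fellContinuous_reducedGrid.continuous_chabauty

theorem continuous_rescaledPoint : Continuous rescaledPoint :=
  fellContinuous_rescaledGrid.continuous_chabauty

variable {p q : sphere (0 : Euc 2) 1 × ℝ × ℝ}

theorem coe_rescaledPoint_of_ne_zero (hr : p.2.2 ≠ 0) :
    ((rescaledPoint p).1 : Set (Euc 2)) = p.2.2 • ((reducedPoint p).1 : Set (Euc 2)) :=
  congrArg SetLike.coe (smul_reducedGrid hr).symm

theorem coe_rescaledPoint_of_eq_zero (hr : p.2.2 = 0) :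
    ((rescaledPoint p).1 : Set (Euc 2)) =
      Submodule.span ℝ ((reducedPoint p).1 : Set (Euc 2)) :=
  (coe_rescaledGrid_of_eq_zero hr).trans
    (congrArg SetLike.coe (span_reducedGrid_of_eq_zero hr).symm)

theorem isLattice_reducedPoint_iff : IsLattice (reducedPoint p).1 ↔ p.2.2 ≠ 0 := by
  change IsLattice (reducedGrid planeOrientation p) ↔ _
  constructor
  · intro h hr
    exact span_singleton_ne_top (by simp) (p.1 : Euc 2) (span_reducedGrid_of_eq_zero hr ▸ h.2)
  · intro hr
    rw [reducedGrid_eq_closure]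
    exact isLattice_closure_pair (by simp [hr])

theorem isLattice_rescaledPoint (hr : p.2.2 ≠ 0) : IsLattice (rescaledPoint p).1 := by
  change IsLattice (rescaledGrid planeOrientation p)
  rw [rescaledGrid_eq_closure hr]
  exact isLattice_closure_pair (by simp [hr])

theorem unitCovolume_rescaledPoint (hr : p.2.2 ≠ 0) : UnitCovolume (rescaledPoint p).1 := by
  refine ⟨_, _, (rescaledGrid_eq_closure hr).symm, ?_⟩
  rw [← areaForm_planeOrientation]
  simp [hr]

theorem reducedPoint_eq_iff (hp : p ∈ reducedBases) (hq : q ∈ reducedBases) :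
    reducedPoint p = reducedPoint q ↔ rescaledPoint p = rescaledPoint q :=
  Subtype.mk_eq_mk.trans ((reducedGrid_eq_iff hp hq).trans Subtype.mk_eq_mk.symm)

theorem image_reducedPoint : reducedPoint '' reducedBases = normOne := by
  ext Γ
  constructor
  · rintro ⟨p, hp, rfl⟩
    refine ⟨p.1, ?_, norm_eq_of_mem_sphere p.1, fun y => one_le_norm_of_mem_reducedGrid hp⟩
    change (p.1 : Euc 2) ∈ reducedGrid planeOrientation p
    rw [reducedGrid_eq_closure]
    exact subset_closure (mem_insert _ _)
  · rintro ⟨v, hvΓ, hv, hmin⟩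
    obtain ⟨p, hp, hΓ⟩ := exists_reducedGrid_eq planeOrientation hv hvΓ hmin
    exact ⟨p, hp, Subtype.ext hΓ⟩

theorem rescaledPoint_mem_covolOne (p : sphere (0 : Euc 2) 1 × ℝ × ℝ) :
    rescaledPoint p ∈ covolOne := by
  have hr : p.2.2 ∈ closure {0}ᶜ := dense_compl_singleton 0 p.2.2
  exact map_mem_closure (f := fun r => rescaledPoint (p.1, p.2.1, r))
    (continuous_rescaledPoint.comp (by fun_prop)) hr
    fun r hr => ⟨isLattice_rescaledPoint hr, unitCovolume_rescaledPoint hr⟩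

theorem areaSpectrum_of_unitCovolume {Γ : AddSubgroup (Euc 2)} (hΓ : UnitCovolume Γ) :
    areaSpectrum planeOrientation Γ = zmultiples (1 : ℝ) := by
  obtain ⟨e, f, rfl, hdet⟩ := hΓ
  rw [areaSpectrum_closure_pair, areaForm_planeOrientation]
  rcases eq_or_eq_neg_of_abs_eq hdet with h | h <;> simp [h, zmultiples_neg]

theorem image_rescaledPoint : rescaledPoint '' reducedBases = covolOne := by
  refine Subset.antisymm ?_ (closure_minimal ?_ ?_)
  · rintro _ ⟨p, -, rfl⟩
    exact rescaledPoint_mem_covolOne p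
  · rintro Γ ⟨⟨hdiscrete, -⟩, hcov⟩
    obtain ⟨p, hp, hpΓ⟩ := exists_rescaledGrid_eq (areaSpectrum_of_unitCovolume hcov)
    exact ⟨p, hp, Subtype.ext hpΓ⟩
  · exact (isCompact_reducedBases.image continuous_rescaledPoint).isClosed

end Plane

/-- 𝒞₁ is homeomorphic to 𝒞¹, via the map sending Γ ∈ 𝒞¹ to the unique rescaling tΓ of unit
covolume (a lattice is rescaled by t = cov(Γ)^{-1/2} > 0; a rank-one subgroup, isomorphic to ℤ,
is sent to the line it spans). -/
theorem covolOne_homeo_normOne :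
    ∃ Φ : normOne ≃ₜ covolOne,
      ∀ Γ : normOne,
        (IsLattice Γ.1.1 →
          ∃ t : ℝ, 0 < t ∧ ((Φ Γ).1.1 : Set (Euc 2)) = t • (Γ.1.1 : Set (Euc 2)) ∧
            IsLattice (Φ Γ).1.1 ∧ UnitCovolume (Φ Γ).1.1) ∧
        (¬ IsLattice Γ.1.1 →
          ((Φ Γ).1.1 : Set (Euc 2)) =
            (Submodule.span ℝ (Γ.1.1 : Set (Euc 2)) : Set (Euc 2))) := by
  obtain ⟨Φ, hΦ⟩ := exists_homeomorph_image_of_isCompact isCompact_reducedBases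
    continuous_reducedPoint.continuousOn continuous_rescaledPoint.continuousOn
    fun p hp q hq => reducedPoint_eq_iff hp hq
  rw [← image_reducedPoint, ← image_rescaledPoint]
  refine ⟨Φ, ?_⟩
  rintro ⟨_, p, hp, rfl⟩
  have hΦp : (Φ ⟨_, p, hp, rfl⟩).1 = rescaledPoint p := congrArg Subtype.val (hΦ ⟨p, hp⟩)
  simp only [hΦp]
  refine ⟨fun hlat => ?_, fun hlat => ?_⟩
  · have hr := isLattice_reducedPoint_iff.1 hlat
    exact ⟨p.2.2, hp.2.1.lt_of_ne' hr, coe_rescaledPoint_of_ne_zero hr,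
      isLattice_rescaledPoint hr, unitCovolume_rescaledPoint hr⟩
  · exact coe_rescaledPoint_of_eq_zero (not_not.1 (mt isLattice_reducedPoint_iff.2 hlat))
end
end
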